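/- Let G be a generalised Heisenberg group with finite generating set S, let ψ be an automorphism of G, and let ψ̄ be the automorphism induced by ψ on the abelianization G/[G,G]. Then there exists a function d belonging to the set {n ↦ n², n ↦ n, n ↦ ln n, n ↦ 1} such that gr_{ψ,G}^S(n) ≃ n^{k} · d(n), where k = rank(G/[G,G]) − rank(id − ψ̄) (the ranks being torsion-free ranks of finitely generated abelian groups and of the image of the endomorphism id − ψ̄). -/

import Mathlib

/-- Word norm with respect to a finite generating set (inverses of generators allowed). -/
noncomputable def wordNorm {G : Type*} [Group G] (S : Finset G) (g : G) : ℕ :=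
  sInf {n | ∃ l : List G, l.length = n ∧ (∀ x ∈ l, x ∈ S ∨ x⁻¹ ∈ S) ∧ l.prod = g}

/-- `x` and `y` are `ψ`-twisted conjugate. -/
def TwistedConj {G : Type*} [Group G] (ψ : G ≃* G) (x y : G) : Prop :=
  ∃ g : G, g * x * (ψ g)⁻¹ = y

/-- The twisted conjugacy growth function: number of `ψ`-twisted conjugacy classes
with a representative of word norm at most `n`. -/
noncomputable def twistedGrowth {G : Type*} [Group G] (ψ : G ≃* G) (S : Finset G) (n : ℕ) : ℕ :=
  Set.ncard ((fun x => {y | TwistedConj ψ x y}) '' {g : G | wordNorm S g ≤ n})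

def GrowthLE (f g : ℕ → ℝ) : Prop :=
  ∃ c : ℕ, 0 < c ∧ ∀ n : ℕ, max 1 (f n) ≤ c * max 1 (g (c * n))

def GrowthEquiv (f g : ℕ → ℝ) : Prop := GrowthLE f g ∧ GrowthLE g f

/-!
Modulo the central subgroup `⟨z⟩`, the `ψ`-twisted conjugacy classes are the cosets of the image of
`id - ψ̄` in the free abelianization `A`. Up to finite index these are the points of a lattice
`ℤ ^ k`, a class of word norm at most `n` lying over a point of a box of radius comparable to `n`.
The classes over a given point form a quotient `ℤ / c` of `⟨z⟩`. Since a commutator of two elements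
of norm `n` can be `z ^ (n ^ 2)`, the subgroup `⟨z⟩` is quadratically distorted, so that `ℤ / c`
contributes about `c` classes if `c ≠ 0` and about `n ^ 2` classes if `c = 0`.

The automorphism sends `z` to `z⁻¹` or to `z`. In the first case `c` divides `2`. In the second
case `c` is the greatest common divisor of an integer vector depending affinely on the point, hence
in suitable coordinates on `ℤ ^ k` it is comparable to the greatest common divisor of an affine
function of `r` of them, or bounded. The sum of such divisors over a box of radius `n` in `ℤ ^ r` is
of order `n ^ 2`, `n ^ 2`, `n ^ 2 * log n` or `n ^ r` for `r = 0`, `1`, `2` or `r ≥ 3`.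
-/

/-! ### Word norms -/

section WordNorm

variable {G : Type*} [Group G] {S : Finset G}

theorem wordNorm_prod_le {l : List G} (hl : ∀ x ∈ l, x ∈ S ∨ x⁻¹ ∈ S) :
    wordNorm S l.prod ≤ l.length :=
  Nat.sInf_le ⟨l, rfl, hl, rfl⟩

theorem wordNorm_one : wordNorm S (1 : G) = 0 :=
  Nat.le_zero.1 (wordNorm_prod_le (l := []) (by simp))

theorem wordNorm_le_one {x : G} (hx : x ∈ S ∨ x⁻¹ ∈ S) : wordNorm S x ≤ 1 := by
  simpa using wordNorm_prod_le (S := S) (l := [x]) (by simpa using hx)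

theorem finite_setOf_letter (S : Finset G) : {x : G | x ∈ S ∨ x⁻¹ ∈ S}.Finite :=
  S.finite_toSet.union S.finite_toSet.inv

theorem exists_forall_letter_le (S : Finset G) (ℓ : G → ℕ) :
    ∃ D, ∀ x, x ∈ S ∨ x⁻¹ ∈ S → ℓ x ≤ D := by
  obtain ⟨D, hD⟩ := ((finite_setOf_letter S).image ℓ).bddAbove
  exact ⟨D, fun x hx => hD ⟨x, hx, rfl⟩⟩

variable (hgen : Subgroup.closure (S : Set G) = ⊤)
include hgen

theorem exists_list_length_eq_wordNorm (g : G) :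
    ∃ l : List G, l.length = wordNorm S g ∧ (∀ x ∈ l, x ∈ S ∨ x⁻¹ ∈ S) ∧ l.prod = g := by
  have hg : g ∈ (Subgroup.closure (S : Set G)).toSubmonoid := hgen ▸ Subgroup.mem_top g
  rw [Subgroup.closure_toSubmonoid] at hg
  obtain ⟨l, hl, rfl⟩ := Submonoid.exists_list_of_mem_closure hg
  exact Nat.sInf_mem (s := {n | ∃ m : List G, m.length = n ∧ _ ∧ m.prod = l.prod})
    ⟨_, l, rfl, hl, rfl⟩

theorem wordNorm_mul_le (g h : G) : wordNorm S (g * h) ≤ wordNorm S g + wordNorm S h := by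
  obtain ⟨l, hl, hlS, rfl⟩ := exists_list_length_eq_wordNorm hgen g
  obtain ⟨m, hm, hmS, rfl⟩ := exists_list_length_eq_wordNorm hgen h
  rw [← hl, ← hm, ← List.length_append, ← List.prod_append]
  exact wordNorm_prod_le fun x hx => (List.mem_append.1 hx).elim (hlS x) (hmS x)

theorem wordNorm_inv_le (g : G) : wordNorm S g⁻¹ ≤ wordNorm S g := by
  obtain ⟨l, hl, hlS, rfl⟩ := exists_list_length_eq_wordNorm hgen g
  rw [← hl, List.prod_inv_reverse, ← List.length_map (as := l) (·⁻¹), ← List.length_reverse]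
  refine wordNorm_prod_le fun x hx => ?_
  obtain ⟨y, hy, rfl⟩ := List.mem_map.1 (List.mem_reverse.1 hx)
  simpa using (hlS y hy).symm

theorem wordNorm_zpow_le (g : G) (i : ℤ) : wordNorm S (g ^ i) ≤ i.natAbs * wordNorm S g := by
  have npow_le (k : ℕ) : wordNorm S (g ^ k) ≤ k * wordNorm S g := by
    induction k with
    | zero => simp [wordNorm_one]
    | succ k ih =>
      rw [pow_succ, add_one_mul]
      exact (wordNorm_mul_le hgen _ _).trans (by gcongr)
  obtain ⟨k, rfl | rfl⟩ := i.eq_nat_or_neg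
  · simpa using npow_le k
  · simpa using (wordNorm_inv_le hgen _).trans (npow_le k)

theorem wordNorm_induction {P : ℕ → G → Prop} (one : P 0 1)
    (mul : ∀ n g x, wordNorm S g ≤ n → x ∈ S ∨ x⁻¹ ∈ S → P n g → P (n + 1) (x * g)) (g : G) :
    P (wordNorm S g) g := by
  obtain ⟨l, hl, hlS, rfl⟩ := exists_list_length_eq_wordNorm hgen g
  rw [← hl]
  clear hl
  induction l with
  | nil => exact one
  | cons x l ih =>
    have htail : ∀ y ∈ l, y ∈ S ∨ y⁻¹ ∈ S := fun y hy => hlS y (List.mem_cons_of_mem x hy)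
    exact mul _ _ x (wordNorm_prod_le htail) (hlS x List.mem_cons_self) (ih htail)

theorem finite_setOf_wordNorm_le (n : ℕ) : {g : G | wordNorm S g ≤ n}.Finite := by
  have : Finite {x // x ∈ S ∨ x⁻¹ ∈ S} := finite_setOf_letter S
  refine ((List.finite_length_le {x // x ∈ S ∨ x⁻¹ ∈ S} n).image
    fun l => (l.map Subtype.val).prod).subset fun g hg => ?_
  obtain ⟨l, hl, hlS, rfl⟩ := exists_list_length_eq_wordNorm hgen g
  lift l to List {x // x ∈ S ∨ x⁻¹ ∈ S} using hlS
  exact ⟨l, (List.length_map _).symm.trans_le (hl.trans_le hg), rfl⟩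

theorem exists_le_mul_wordNorm {ℓ : G → ℕ} (hone : ℓ 1 = 0)
    (hmul : ∀ g h, ℓ (g * h) ≤ ℓ g + ℓ h) : ∃ C, ∀ g, ℓ g ≤ C * wordNorm S g := by
  obtain ⟨D, hD⟩ := exists_forall_letter_le S ℓ
  refine ⟨D, wordNorm_induction hgen (P := fun n g => ℓ g ≤ D * n) hone.le ?_⟩
  intro n g x _ hx ih
  linarith [hmul x g, hD x hx]

theorem exists_le_mul_wordNorm_sq {ℓ : G → ℕ} {K : ℕ} (hone : ℓ 1 = 0)
    (hmul : ∀ g h, ℓ (g * h) ≤ ℓ g + ℓ h + K * (wordNorm S g * wordNorm S h)) :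
    ∃ C, ∀ g, ℓ g ≤ C * wordNorm S g ^ 2 := by
  obtain ⟨D, hD⟩ := exists_forall_letter_le S ℓ
  refine ⟨D + K, wordNorm_induction hgen (P := fun n g => ℓ g ≤ (D + K) * n ^ 2) hone.le ?_⟩
  intro n g x hg hx ih
  have hcross : K * (wordNorm S x * wordNorm S g) ≤ K * (1 * n) := by
    gcongr
    exact wordNorm_le_one hx
  nlinarith [hmul x g, hD x hx]

theorem exists_wordNorm_map_le (f : G →* G) :
    ∃ C, ∀ g, wordNorm S (f g) ≤ C * wordNorm S g :=
  exists_le_mul_wordNorm hgen (ℓ := fun g => wordNorm S (f g)) (by rw [map_one, wordNorm_one])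
    fun g h => by simpa only [map_mul] using wordNorm_mul_le hgen (f g) (f h)

theorem exists_natAbs_le_mul_wordNorm {f : G → ℤ} (hf : ∀ g h, f (g * h) = f g + f h) :
    ∃ C, ∀ g, (f g).natAbs ≤ C * wordNorm S g :=
  exists_le_mul_wordNorm hgen (ℓ := fun g => (f g).natAbs)
    (Int.natAbs_eq_zero.2 <| by simpa using hf 1 1)
    fun g h => by simpa only [hf] using Int.natAbs_add_le (f g) (f h)

end WordNorm

/-! ### Comparison of growth functions -/

section ScaleLE

/-- Comparison of growth functions up to a constant factor and a linear change of variable, without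
the truncation at `1` in `GrowthLE`. -/
def ScaleLE (f g : ℕ → ℝ) : Prop :=
  ∃ E D : ℕ, 0 < D ∧ ∀ n, 1 ≤ n → f n ≤ E * g (D * n)

/-- The equivalence relation associated with `ScaleLE`. -/
def ScaleEquiv (f g : ℕ → ℝ) : Prop := ScaleLE f g ∧ ScaleLE g f

variable {f g h : ℕ → ℝ}

namespace ScaleLE

theorem of_le_mul (E : ℕ) (hfg : ∀ n, 1 ≤ n → f n ≤ E * g n) : ScaleLE f g :=
  ⟨E, 1, one_pos, fun n hn => by simpa using hfg n hn⟩

theorem of_natCast_le {f g : ℕ → ℕ} {E D : ℕ} (hD : 0 < D)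
    (hfg : ∀ n, 1 ≤ n → f n ≤ E * g (D * n)) : ScaleLE (fun n => f n) (fun n => g n) :=
  ⟨E, D, hD, fun n hn => show (f n : ℝ) ≤ E * (g (D * n) : ℕ) from mod_cast hfg n hn⟩

theorem trans : ScaleLE f g → ScaleLE g h → ScaleLE f h := by
  rintro ⟨E, D, hD, hfg⟩ ⟨E', D', hD', hgh⟩
  refine ⟨E * E', D' * D, Nat.mul_pos hD' hD, fun n hn => (hfg n hn).trans ?_⟩
  rw [Nat.cast_mul, mul_assoc, mul_assoc]
  exact mul_le_mul_of_nonneg_left (hgh _ (Nat.mul_pos hD hn)) E.cast_nonneg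

theorem pow_mul (t : ℕ) (hg : ∀ n, 0 ≤ g n) :
    ScaleLE f g → ScaleLE (fun n => (n : ℝ) ^ t * f n) (fun n => (n : ℝ) ^ t * g n) := by
  rintro ⟨E, D, hD, hfg⟩
  refine ⟨E, D, hD, fun n hn => ?_⟩
  have hn_le : (n : ℝ) ≤ (D * n : ℕ) := by exact_mod_cast Nat.le_mul_of_pos_left n hD
  calc (n : ℝ) ^ t * f n ≤ (n : ℝ) ^ t * (E * g (D * n)) := by gcongr; exact hfg n hn
    _ = E * ((n : ℝ) ^ t * g (D * n)) := by ring
    _ ≤ E * (((D * n : ℕ) : ℝ) ^ t * g (D * n)) := by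
        have := hg (D * n)
        gcongr

theorem growthLE (hg : Monotone g) : ScaleLE f g → GrowthLE f g := by
  rintro ⟨E, D, hD, hfg⟩
  set K := E + D + ⌈f 0⌉₊
  have hK1 : (1 : ℝ) ≤ K := by exact_mod_cast (by omega : 1 ≤ K)
  refine ⟨K, by omega, fun n => max_le (one_le_mul_of_one_le_of_one_le hK1 (le_max_left _ _)) ?_⟩
  rcases Nat.eq_zero_or_pos n with rfl | hn
  · calc f 0 ≤ K := (Nat.le_ceil _).trans (by exact_mod_cast Nat.le_add_left _ _)
      _ ≤ K * max 1 (g (K * 0)) := le_mul_of_one_le_right (by positivity) (le_max_left _ _)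
  · calc f n ≤ E * g (D * n) := hfg n hn
      _ ≤ E * max 1 (g (K * n)) := by
          gcongr
          exact (hg (Nat.mul_le_mul_right _ (by omega))).trans (le_max_right _ _)
      _ ≤ K * max 1 (g (K * n)) := by
          gcongr
          omega

end ScaleLE

namespace ScaleEquiv

theorem trans (hfg : ScaleEquiv f g) (hgh : ScaleEquiv g h) : ScaleEquiv f h :=
  ⟨hfg.1.trans hgh.1, hgh.2.trans hfg.2⟩

theorem pow_mul (t : ℕ) (hf : ∀ n, 0 ≤ f n) (hg : ∀ n, 0 ≤ g n) (hfg : ScaleEquiv f g) :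
    ScaleEquiv (fun n => (n : ℝ) ^ t * f n) (fun n => (n : ℝ) ^ t * g n) :=
  ⟨hfg.1.pow_mul t hg, hfg.2.pow_mul t hf⟩

theorem growthEquiv (hf : Monotone f) (hg : Monotone g) (hfg : ScaleEquiv f g) :
    GrowthEquiv f g :=
  ⟨hfg.1.growthLE hg, hfg.2.growthLE hf⟩

end ScaleEquiv

end ScaleLE

/-! ### Sums of greatest common divisors over boxes -/

section Box

theorem add_smul_injective {ι : Type*} (s₀ : ι → ℤ) {N : ℕ} (hN : N ≠ 0) :
    Function.Injective fun s : ι → ℤ => s₀ + N • s :=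
  (add_right_injective s₀).comp (nsmul_right_injective hN)

variable {ι : Type*} [Fintype ι] [DecidableEq ι]

/-- The integer points of the cube `[-n, n] ^ ι`. -/
noncomputable def box (ι : Type*) [Fintype ι] [DecidableEq ι] (n : ℕ) : Finset (ι → ℤ) :=
  Fintype.piFinset fun _ => Finset.Icc (-(n : ℤ)) n

theorem mem_box {n : ℕ} {s : ι → ℤ} : s ∈ box ι n ↔ ∀ i, |s i| ≤ n := by
  simp [box, Fintype.mem_piFinset, abs_le]

theorem natAbs_le_of_mem_box {n : ℕ} {s : ι → ℤ} (hs : s ∈ box ι n) (i : ι) : (s i).natAbs ≤ n :=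
  mod_cast (Int.abs_eq_natAbs _).symm.trans_le (mem_box.1 hs i)

theorem card_box (n : ℕ) : (box ι n).card = (2 * n + 1) ^ Fintype.card ι := by
  rw [box, Fintype.card_piFinset, Finset.prod_const, Int.card_Icc, Finset.card_univ]
  congr 1
  omega

theorem box_mono : Monotone (box ι) := fun _ _ hnm _ hs =>
  mem_box.2 fun i => (mem_box.1 hs i).trans (mod_cast hnm)

theorem exists_mem_box (s : ι → ℤ) : ∃ k, s ∈ box ι k := by
  refine ⟨∑ i, (s i).natAbs, mem_box.2 fun i => ?_⟩
  rw [Int.abs_eq_natAbs]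
  exact_mod_cast Finset.single_le_sum (f := fun i => (s i).natAbs) (fun _ _ => Nat.zero_le _)
    (Finset.mem_univ i)

theorem add_smul_mem_box {k n N : ℕ} {s₀ s : ι → ℤ} (hs₀ : s₀ ∈ box ι k) (hs : s ∈ box ι n) :
    s₀ + N • s ∈ box ι (k + N * n) := by
  rw [mem_box] at *
  intro i
  calc |(s₀ + N • s) i| ≤ |s₀ i| + |N • s i| := abs_add_le _ _
    _ = |s₀ i| + N * |s i| := by rw [abs_nsmul, nsmul_eq_mul]
    _ ≤ k + N * n := by gcongr <;> [exact hs₀ i; exact hs i]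
    _ = (k + N * n : ℕ) := by push_cast; rfl

end Box

section VecGcd

variable {ι : Type*} [Fintype ι]

/-- The nonnegative greatest common divisor of the entries of an integer vector. -/
def vecGcd (w : ι → ℤ) : ℕ := Finset.univ.gcd fun i => (w i).natAbs

theorem vecGcd_dvd (w : ι → ℤ) (i : ι) : (vecGcd w : ℤ) ∣ w i :=
  Int.natCast_dvd.2 (Finset.gcd_dvd (Finset.mem_univ i))

theorem dvd_vecGcd {w : ι → ℤ} {e : ℕ} (h : ∀ i, (e : ℤ) ∣ w i) : e ∣ vecGcd w :=
  Finset.dvd_gcd fun i _ => Int.natCast_dvd.1 (h i)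

theorem vecGcd_eq_zero_iff {w : ι → ℤ} : vecGcd w = 0 ↔ w = 0 := by
  simp [vecGcd, Finset.gcd_eq_zero_iff, funext_iff]

theorem vecGcd_le [DecidableEq ι] {n : ℕ} {w : ι → ℤ} (hw : w ∈ box ι n) : vecGcd w ≤ n := by
  by_cases hzero : w = 0
  · simp [vecGcd_eq_zero_iff.2 hzero]
  · obtain ⟨i, hi⟩ := Function.ne_iff.1 hzero
    have hle := Int.le_of_dvd (abs_pos.2 hi) ((dvd_abs _ _).2 (vecGcd_dvd w i))
    exact_mod_cast hle.trans (mem_box.1 hw i)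

end VecGcd

section WeightSum

/-- The number of classes, up to constants, that a coset space `ℤ / c` contributes to a ball of
radius `n` when `ℤ` is quadratically distorted; here `c = 0` encodes an infinite coset space. -/
def weight (n c : ℕ) : ℕ := if c = 0 then n ^ 2 + 1 else c

theorem weight_zero (n : ℕ) : weight n 0 = n ^ 2 + 1 := rfl

theorem weight_of_ne_zero (n : ℕ) {c : ℕ} (hc : c ≠ 0) : weight n c = c := if_neg hc

theorem one_le_weight (n c : ℕ) : 1 ≤ weight n c := by
  unfold weight
  split_ifs <;> omega

theorem le_weight (n c : ℕ) : c ≤ weight n c := by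
  unfold weight
  split_ifs <;> omega

theorem weight_le_mul_weight {a b C m n : ℕ} (hC : 1 ≤ C) (hab : a ≤ C * b) (hba : b ≤ C * a)
    (hnm : n ≤ m) : weight n a ≤ C * weight m b := by
  rcases eq_or_ne a 0 with rfl | ha
  · obtain rfl : b = 0 := by simpa using hba
    have hsq : n ^ 2 ≤ m ^ 2 := Nat.pow_le_pow_left hnm 2
    simp only [weight_zero]
    nlinarith
  · have hb : b ≠ 0 := by rintro rfl; exact ha (by simpa using hab)
    rwa [weight_of_ne_zero n ha, weight_of_ne_zero m hb]

theorem weight_mono {m n : ℕ} (c : ℕ) (hnm : n ≤ m) : weight n c ≤ weight m c := by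
  simpa using weight_le_mul_weight le_rfl (one_mul c).ge (one_mul c).ge hnm

theorem weight_le_sq_add_one {n c B : ℕ} (hc : c ≤ B * n) :
    weight n c ≤ ((B + 1) * n) ^ 2 + 1 := by
  rcases eq_or_ne c 0 with rfl | hne
  · rw [weight_zero]
    gcongr
    exact Nat.le_mul_of_pos_left n B.succ_pos
  · rw [weight_of_ne_zero n hne]
    calc c ≤ (B + 1) * n := hc.trans (Nat.mul_le_mul_right n B.le_succ)
      _ ≤ ((B + 1) * n) ^ 2 := Nat.le_self_pow two_ne_zero _
      _ ≤ ((B + 1) * n) ^ 2 + 1 := Nat.le_succ _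

variable {ι κ : Type*} [Fintype ι] [DecidableEq ι] [Fintype κ] [DecidableEq κ]

/-- The total weight of the coset spaces `ℤ / c s`, for `s` in the box of radius `n`. -/
noncomputable def weightSum (c : (ι → ℤ) → ℕ) (n : ℕ) : ℕ := ∑ s ∈ box ι n, weight n (c s)

theorem weightSum_mono (c : (ι → ℤ) → ℕ) : Monotone (weightSum c) := fun _ _ hnm =>
  (Finset.sum_le_sum fun s _ => weight_mono (c s) hnm).trans
    (Finset.sum_le_sum_of_subset (box_mono hnm))

theorem pow_card_le_weightSum (c : (ι → ℤ) → ℕ) (n : ℕ) : n ^ Fintype.card ι ≤ weightSum c n :=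
  calc n ^ Fintype.card ι ≤ (box ι n).card • 1 := by
        rw [card_box, smul_eq_mul, mul_one]
        exact Nat.pow_le_pow_left (by omega) _
    _ ≤ weightSum c n := Finset.card_nsmul_le_sum _ _ _ fun s _ => one_le_weight n (c s)

theorem card_nsmul_le_weightSum {c : (ι → ℤ) → ℕ} {n b : ℕ} {T : Finset (ι → ℤ)}
    (hT : T ⊆ box ι n) (hb : ∀ s ∈ T, b ≤ weight n (c s)) : T.card * b ≤ weightSum c n :=
  (Finset.card_nsmul_le_sum T _ b hb).trans (Finset.sum_le_sum_of_subset hT)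

theorem weightSum_comp_inl (c : (ι → ℤ) → ℕ) (n : ℕ) :
    weightSum (fun s : ι ⊕ κ → ℤ => c (s ∘ Sum.inl)) n =
      (2 * n + 1) ^ Fintype.card κ * weightSum c n := by
  have hsplit : weightSum (fun s : ι ⊕ κ → ℤ => c (s ∘ Sum.inl)) n =
      ∑ u ∈ box ι n ×ˢ box κ n, weight n (c u.1) := by
    refine Finset.sum_equiv (Equiv.sumArrowEquivProdArrow ι κ ℤ) (fun s => ?_) fun s _ => rfl
    simp only [Finset.mem_product, mem_box, Sum.forall]
    rfl
  rw [hsplit, Finset.sum_product_right]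
  dsimp only
  rw [Finset.sum_const, card_box, smul_eq_mul, weightSum]

theorem scaleEquiv_weightSum_comp_inl (c : (ι → ℤ) → ℕ) :
    ScaleEquiv (fun n => (weightSum (fun s : ι ⊕ κ → ℤ => c (s ∘ Sum.inl)) n : ℝ))
      (fun n => (n : ℝ) ^ Fintype.card κ * weightSum c n) := by
  constructor
  · refine .of_le_mul (3 ^ Fintype.card κ) fun n hn => ?_
    rw [weightSum_comp_inl]
    have hpow : (2 * n + 1) ^ Fintype.card κ ≤ (3 * n) ^ Fintype.card κ :=
      Nat.pow_le_pow_left (by omega) _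
    rw [mul_pow] at hpow
    exact_mod_cast (Nat.mul_le_mul_right _ hpow).trans_eq (mul_assoc _ _ _)
  · refine .of_le_mul 1 fun n _ => ?_
    rw [weightSum_comp_inl, Nat.cast_one, one_mul]
    have hpow : n ^ Fintype.card κ ≤ (2 * n + 1) ^ Fintype.card κ :=
      Nat.pow_le_pow_left (by omega) _
    exact_mod_cast Nat.mul_le_mul_right _ hpow

theorem scaleEquiv_weightSum_one :
    ScaleEquiv (fun n => (weightSum (fun _ : ι → ℤ => 1) n : ℝ))
      (fun n => (n : ℝ) ^ Fintype.card ι) := by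
  constructor
  · refine .of_le_mul (3 ^ Fintype.card ι) fun n hn => ?_
    have hpow : (2 * n + 1) ^ Fintype.card ι ≤ (3 * n) ^ Fintype.card ι :=
      Nat.pow_le_pow_left (by omega) _
    rw [mul_pow, ← card_box, ← mul_one (Finset.card _), ← smul_eq_mul, ← Finset.sum_const] at hpow
    exact_mod_cast hpow
  · refine .of_le_mul 1 fun n _ => ?_
    rw [Nat.cast_one, one_mul]
    exact_mod_cast pow_card_le_weightSum (fun _ : ι → ℤ => 1) n

end WeightSum

section GcdGrowth

/-- The average order of magnitude of the greatest common divisor of the points of a box of radius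
`n` in an affine sublattice of `ℤ ^ r`, the origin being counted with weight `n ^ 2`. -/
noncomputable def gcdGrowth : ℕ → ℕ → ℝ
  | 0, n => (n : ℝ) ^ 2
  | 1, n => n
  | 2, n => Real.log n
  | _ + 3, _ => 1

theorem gcdGrowth_eq_sq_or_id_or_log_or_one : ∀ r,
    gcdGrowth r = (fun n : ℕ => (n : ℝ) ^ 2) ∨ gcdGrowth r = (fun n : ℕ => (n : ℝ)) ∨
      gcdGrowth r = (fun n : ℕ => Real.log n) ∨ gcdGrowth r = fun _ : ℕ => (1 : ℝ)
  | 0 => .inl rfl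
  | 1 => .inr (.inl rfl)
  | 2 => .inr (.inr (.inl rfl))
  | _ + 3 => .inr (.inr (.inr rfl))

theorem gcdGrowth_nonneg : ∀ r n, 0 ≤ gcdGrowth r n
  | 0, _ => by rw [gcdGrowth]; positivity
  | 1, n => n.cast_nonneg
  | 2, n => Real.log_natCast_nonneg n
  | _ + 3, _ => zero_le_one

theorem gcdGrowth_mono : ∀ r, Monotone (gcdGrowth r)
  | 0, n, m, hnm => by simp only [gcdGrowth]; gcongr
  | 1, n, m, hnm => by simpa only [gcdGrowth, Nat.cast_le] using hnm
  | 2, 0, m, _ => by simpa [gcdGrowth] using Real.log_natCast_nonneg m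
  | 2, n + 1, m, hnm => Real.log_le_log (by positivity) (by exact_mod_cast hnm)
  | _ + 3, _, _, _ => le_rfl

theorem pow_mul_gcdGrowth_mono (k r : ℕ) : Monotone fun n : ℕ => (n : ℝ) ^ k * gcdGrowth r n :=
  fun n _ hnm =>
    mul_le_mul (by gcongr) (gcdGrowth_mono r hnm) (gcdGrowth_nonneg r n) (by positivity)

theorem one_add_log_le_log_three_mul {n : ℕ} (hn : 1 ≤ n) :
    1 + Real.log n ≤ Real.log (3 * n : ℕ) := by
  have hlog_three : 1 ≤ Real.log 3 :=
    (Real.le_log_iff_exp_le three_pos).2 Real.exp_one_lt_three.le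
  rw [Nat.cast_mul, Real.log_mul (by norm_num) (by positivity)]
  exact_mod_cast add_le_add_left hlog_three _

theorem sq_le_pow_mul_gcdGrowth (r : ℕ) {n : ℕ} (hn : 1 ≤ n) :
    (n : ℝ) ^ 2 ≤ (n : ℝ) ^ r * gcdGrowth r (3 * n) := by
  have hn' : (1 : ℝ) ≤ n := by exact_mod_cast hn
  match r with
  | 0 => simp only [gcdGrowth]; push_cast; nlinarith
  | 1 => simp only [gcdGrowth]; push_cast; nlinarith
  | 2 =>
    refine le_mul_of_one_le_right (by positivity) ?_
    exact (le_add_of_nonneg_right (Real.log_natCast_nonneg n)).trans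
      (one_add_log_le_log_three_mul hn)
  | r + 3 => simpa only [gcdGrowth, mul_one] using pow_le_pow_right₀ hn' (by omega)

end GcdGrowth

section UpperBound

variable {ι : Type*} [Fintype ι] [DecidableEq ι]

theorem card_filter_vecGcd_eq_le (R : ℕ) {e : ℕ} (he : e ≠ 0) :
    ((box ι R).filter (vecGcd · = e)).card ≤ (2 * (R / e) + 1) ^ Fintype.card ι := by
  have he' : (0 : ℤ) < e := by positivity
  rw [← card_box]
  refine Finset.card_le_card_of_injOn (fun w i => w i / e) ?_ ?_
  · intro w hw
    obtain ⟨hwR, rfl⟩ := Finset.mem_filter.1 (Finset.mem_coe.1 hw)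
    refine Finset.mem_coe.2 (mem_box.2 fun i => ?_)
    obtain ⟨q, hq⟩ := vecGcd_dvd w i
    have hle := mem_box.1 hwR i
    rw [hq, abs_mul, Nat.abs_cast, mul_comm] at hle
    dsimp only
    rw [hq, Int.mul_ediv_cancel_left _ he'.ne', Int.natCast_ediv]
    exact (Int.le_ediv_iff_mul_le he').2 hle
  · intro w hw w' hw' h
    have hdvd : ∀ v ∈ (box ι R).filter (vecGcd · = e), ∀ i, (e : ℤ) ∣ v i := fun v hv i =>
      (Finset.mem_filter.1 hv).2 ▸ vecGcd_dvd v i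
    funext i
    rw [← Int.mul_ediv_cancel' (hdvd w hw i), show w i / e = w' i / e from congrFun h i,
      Int.mul_ediv_cancel' (hdvd w' hw' i)]

theorem sum_vecGcd_le (R : ℕ) :
    ∑ w ∈ (box ι R).filter (· ≠ 0), vecGcd w ≤
      ∑ e ∈ Finset.Icc 1 R, e * (2 * (R / e) + 1) ^ Fintype.card ι := by
  have hmaps : ∀ w ∈ (box ι R).filter (· ≠ 0), vecGcd w ∈ Finset.Icc 1 R := by
    intro w hw
    obtain ⟨hwR, hw0⟩ := Finset.mem_filter.1 hw
    exact Finset.mem_Icc.2 ⟨Nat.one_le_iff_ne_zero.2 (vecGcd_eq_zero_iff.not.2 hw0), vecGcd_le hwR⟩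
  rw [← Finset.sum_fiberwise_of_maps_to hmaps]
  refine Finset.sum_le_sum fun e he => ?_
  have he0 : e ≠ 0 := Nat.one_le_iff_ne_zero.1 (Finset.mem_Icc.1 he).1
  rw [Finset.sum_congr rfl fun w hw => (Finset.mem_filter.1 hw).2, Finset.sum_const, smul_eq_mul,
    mul_comm]
  refine Nat.mul_le_mul_left e (le_trans (Finset.card_le_card ?_) (card_filter_vecGcd_eq_le R he0))
  exact Finset.filter_subset_filter _ (Finset.filter_subset _ _)

theorem sum_mul_inv_pow_le (r : ℕ) {R : ℕ} (hR : 1 ≤ R) :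
    ∑ e ∈ Finset.Icc 1 R, (e : ℝ) * (e : ℝ)⁻¹ ^ r ≤ 2 * gcdGrowth r (3 * R) := by
  have hR' : (1 : ℝ) ≤ R := by exact_mod_cast hR
  have hmem : ∀ e ∈ Finset.Icc 1 R, (1 : ℝ) ≤ e ∧ (e : ℝ) ≤ R := fun e he => by
    exact_mod_cast Finset.mem_Icc.1 he
  have hcancel (q : ℕ) : ∑ e ∈ Finset.Icc 1 R, (e : ℝ) * (e : ℝ)⁻¹ ^ (q + 1) =
      ∑ e ∈ Finset.Icc 1 R, (e : ℝ)⁻¹ ^ q := Finset.sum_congr rfl fun e he => by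
    rw [pow_succ', mul_inv_cancel_left₀ (zero_lt_one.trans_le (hmem e he).1).ne']
  match r with
  | 0 =>
    have hcard : ∑ e ∈ Finset.Icc 1 R, (e : ℝ) * (e : ℝ)⁻¹ ^ 0 ≤ R * R := by
      simpa using Finset.sum_le_card_nsmul _ (fun e : ℕ => (e : ℝ)) _ fun e he => (hmem e he).2
    simp only [gcdGrowth]
    push_cast
    nlinarith
  | 1 =>
    simp only [hcancel, pow_zero, Finset.sum_const, gcdGrowth, Nat.card_Icc, nsmul_eq_mul]
    push_cast
    linarith
  | 2 =>
    have hharmonic := (harmonic_le_one_add_log R).trans (one_add_log_le_log_three_mul hR)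
    rw [harmonic_eq_sum_Icc] at hharmonic
    push_cast at hharmonic
    simp only [hcancel, pow_one, gcdGrowth]
    push_cast
    linarith [Real.log_nonneg (by linarith : (1 : ℝ) ≤ 3 * R)]
  | r + 3 =>
    rw [hcancel]
    calc ∑ e ∈ Finset.Icc 1 R, (e : ℝ)⁻¹ ^ (r + 2)
        ≤ ∑ e ∈ Finset.Ioo 0 (R + 1), ((e : ℝ) ^ 2)⁻¹ := by
          refine Finset.sum_le_sum fun e he => ?_
          rw [← inv_pow]
          have he1 := (hmem e he).1
          exact pow_le_pow_of_le_one (by positivity) (inv_le_one_of_one_le₀ he1) (by omega)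
      _ ≤ 2 * gcdGrowth (r + 3) (3 * R) := by
          simpa [gcdGrowth] using sum_Ioo_inv_sq_le (α := ℝ) 0 (R + 1)

theorem sum_mul_two_mul_div_add_one_pow_le (r : ℕ) {R : ℕ} (hR : 1 ≤ R) :
    ((∑ e ∈ Finset.Icc 1 R, e * (2 * (R / e) + 1) ^ r : ℕ) : ℝ) ≤
      2 * (((3 * R : ℕ) : ℝ) ^ r * gcdGrowth r (3 * R)) := by
  have hterm : ∀ e ∈ Finset.Icc 1 R,
      ((e * (2 * (R / e) + 1) ^ r : ℕ) : ℝ) ≤ (3 * R : ℕ) ^ r * ((e : ℝ) * (e : ℝ)⁻¹ ^ r) := by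
    intro e he
    obtain ⟨he1, heR⟩ := Finset.mem_Icc.1 he
    have hquot : 2 * ((R / e : ℕ) : ℝ) + 1 ≤ (3 * R : ℕ) * (e : ℝ)⁻¹ := by
      rw [← div_eq_mul_inv, le_div_iff₀ (by positivity)]
      exact_mod_cast (by nlinarith [Nat.div_mul_le_self R e] : (2 * (R / e) + 1) * e ≤ 3 * R)
    calc ((e * (2 * (R / e) + 1) ^ r : ℕ) : ℝ) = e * (2 * ((R / e : ℕ) : ℝ) + 1) ^ r := by
          push_cast; rfl
      _ ≤ e * ((3 * R : ℕ) * (e : ℝ)⁻¹) ^ r := by gcongr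
      _ = (3 * R : ℕ) ^ r * ((e : ℝ) * (e : ℝ)⁻¹ ^ r) := by rw [mul_pow]; ring
  calc ((∑ e ∈ Finset.Icc 1 R, e * (2 * (R / e) + 1) ^ r : ℕ) : ℝ)
      ≤ ∑ e ∈ Finset.Icc 1 R, (3 * R : ℕ) ^ r * ((e : ℝ) * (e : ℝ)⁻¹ ^ r) := by
        rw [Nat.cast_sum]
        exact Finset.sum_le_sum hterm
    _ ≤ (3 * R : ℕ) ^ r * (2 * gcdGrowth r (3 * R)) := by
        rw [← Finset.mul_sum]
        gcongr
        exact sum_mul_inv_pow_le r hR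
    _ = 2 * (((3 * R : ℕ) : ℝ) ^ r * gcdGrowth r (3 * R)) := by ring

/-- The greatest common divisor of the entries of `s₀ + N s`. -/
def affineGcd {ι : Type*} [Fintype ι] (s₀ : ι → ℤ) (N : ℕ) (s : ι → ℤ) : ℕ := vecGcd (s₀ + N • s)

variable {s₀ : ι → ℤ} {k N : ℕ}

theorem affineGcd_le {n : ℕ} (hs₀ : s₀ ∈ box ι k) (hn : 1 ≤ n) {s : ι → ℤ} (hs : s ∈ box ι n) :
    affineGcd s₀ N s ≤ (k + N) * n :=
  (vecGcd_le (add_smul_mem_box hs₀ hs)).trans (by nlinarith)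

theorem weightSum_affineGcd_le {n : ℕ} (hs₀ : s₀ ∈ box ι k) (hN : N ≠ 0) (hn : 1 ≤ n) :
    weightSum (affineGcd s₀ N) n ≤
      (n ^ 2 + 1) + ∑ w ∈ (box ι ((k + N) * n)).filter (· ≠ 0), vecGcd w := by
  have hinj := add_smul_injective s₀ hN
  rw [weightSum, ← Finset.sum_filter_add_sum_filter_not _ (fun s => affineGcd s₀ N s = 0)]
  refine Nat.add_le_add ?_ ?_
  · have hcard : ((box ι n).filter (fun s => affineGcd s₀ N s = 0)).card ≤ 1 := by
      refine Finset.card_le_one.2 fun a ha b hb => hinj ?_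
      exact (vecGcd_eq_zero_iff.1 (Finset.mem_filter.1 ha).2).trans
        (vecGcd_eq_zero_iff.1 (Finset.mem_filter.1 hb).2).symm
    rw [Finset.sum_congr rfl fun s hs => by rw [(Finset.mem_filter.1 hs).2, weight_zero],
      Finset.sum_const]
    exact (Nat.mul_le_mul_right _ hcard).trans_eq (one_mul _)
  · rw [Finset.sum_congr rfl fun s hs => weight_of_ne_zero n (Finset.mem_filter.1 hs).2]
    change ∑ s ∈ _, vecGcd (s₀ + N • s) ≤ _
    rw [← Finset.sum_image (f := vecGcd) hinj.injOn]
    refine Finset.sum_le_sum_of_subset fun w hw => ?_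
    obtain ⟨s, hs, rfl⟩ := Finset.mem_image.1 hw
    obtain ⟨hsn, hs0⟩ := Finset.mem_filter.1 hs
    have hle : k + N * n ≤ (k + N) * n := by nlinarith
    exact Finset.mem_filter.2
      ⟨box_mono hle (add_smul_mem_box hs₀ hsn), vecGcd_eq_zero_iff.not.1 hs0⟩

theorem scaleLE_weightSum_affineGcd (s₀ : ι → ℤ) (hN : N ≠ 0) :
    ScaleLE (fun n => (weightSum (affineGcd s₀ N) n : ℝ))
      (fun n => (n : ℝ) ^ Fintype.card ι * gcdGrowth (Fintype.card ι) n) := by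
  obtain ⟨k, hk⟩ := exists_mem_box s₀
  refine ⟨4, 3 * (k + N), by omega, fun n hn => ?_⟩
  rw [mul_assoc 3]
  set r := Fintype.card ι
  set F : ℕ → ℝ := fun n => (n : ℝ) ^ r * gcdGrowth r n
  set R := (k + N) * n
  have hnR : n ≤ R := Nat.le_mul_of_pos_left n (by omega)
  have hsum : ((∑ w ∈ (box ι R).filter (· ≠ 0), vecGcd w : ℕ) : ℝ) ≤ 2 * F (3 * R) :=
    (Nat.cast_le.2 (sum_vecGcd_le R)).trans
      (sum_mul_two_mul_div_add_one_pow_le r (hn.trans hnR))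
  have hsq : (n : ℝ) ^ 2 ≤ F (3 * R) :=
    calc (n : ℝ) ^ 2 ≤ (n : ℝ) ^ r * gcdGrowth r (3 * n) := sq_le_pow_mul_gcdGrowth r hn
      _ ≤ F (3 * n) := by
          have := gcdGrowth_nonneg r (3 * n)
          simp only [F]
          gcongr
          omega
      _ ≤ F (3 * R) := pow_mul_gcdGrowth_mono r r (by gcongr)
  have hone : (1 : ℝ) ≤ (n : ℝ) ^ 2 := one_le_pow₀ (by exact_mod_cast hn)
  have hmain : (weightSum (affineGcd s₀ N) n : ℝ) ≤
      ((n : ℝ) ^ 2 + 1) + (∑ w ∈ (box ι R).filter (· ≠ 0), vecGcd w : ℕ) := by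
    exact_mod_cast weightSum_affineGcd_le hk hN hn
  push_cast at hmain hsum ⊢
  linarith

end UpperBound

section TotientSums

theorem sub_sum_divisors_erase_one_le_totient (e : ℕ) :
    (e : ℝ) - ∑ k ∈ e.divisors.erase 1, (e : ℝ) / k ≤ e.totient := by
  rcases eq_or_ne e 0 with rfl | he
  · simp
  have hsum : e.totient + ∑ k ∈ e.divisors.erase 1, (e / k).totient = e := by
    conv_rhs => rw [← Nat.sum_totient e, ← Nat.sum_div_divisors e Nat.totient,
      ← Finset.add_sum_erase _ _ (Nat.one_mem_divisors.2 he), Nat.div_one]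
  have hle : ((∑ k ∈ e.divisors.erase 1, (e / k).totient : ℕ) : ℝ) ≤
      ∑ k ∈ e.divisors.erase 1, (e : ℝ) / k := by
    rw [Nat.cast_sum]
    refine Finset.sum_le_sum fun k _ => le_trans ?_ Nat.cast_div_le
    exact_mod_cast (e / k).totient_le
  have hcast : (e.totient : ℝ) + (∑ k ∈ e.divisors.erase 1, (e / k).totient : ℕ) = e := by
    exact_mod_cast hsum
  linarith

theorem sum_Icc_two_inv_sq_le (R : ℕ) : ∑ k ∈ Finset.Icc 2 R, ((k : ℝ) ^ 2)⁻¹ ≤ 3 / 4 := by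
  rcases lt_or_ge R 2 with hR | hR
  · rw [Finset.Icc_eq_empty (by omega)]
    norm_num
  · rw [← Finset.add_sum_Ioc_eq_sum_Icc hR]
    have htail := sum_Ioc_inv_sq_le_sub (α := ℝ) two_ne_zero hR
    have : (0 : ℝ) ≤ (R : ℝ)⁻¹ := by positivity
    norm_num at htail ⊢
    linarith

/-- The partial sum `∑_{a < m} 1 / (1 + N a)` of the harmonic series along the residue class of
`1` modulo `N`. -/
noncomputable def harmonicProgression (N m : ℕ) : ℝ :=
  ∑ a ∈ Finset.range m, ((1 + N * a : ℕ) : ℝ)⁻¹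

theorem harmonicProgression_nonneg (N m : ℕ) : 0 ≤ harmonicProgression N m :=
  Finset.sum_nonneg fun _ _ => by positivity

theorem log_le_mul_harmonicProgression {N : ℕ} (hN : 1 ≤ N) (m : ℕ) :
    Real.log m ≤ N * harmonicProgression N m := by
  rcases Nat.eq_zero_or_pos m with rfl | hm
  · simp [harmonicProgression]
  calc Real.log m ≤ Real.log (m + 1 : ℕ) :=
        Real.log_le_log (by positivity) (by exact_mod_cast m.le_succ)
    _ ≤ ∑ a ∈ Finset.range m, ((a + 1 : ℕ) : ℝ)⁻¹ := by
        simpa [harmonic] using log_add_one_le_harmonic m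
    _ ≤ ∑ a ∈ Finset.range m, N * ((1 + N * a : ℕ) : ℝ)⁻¹ := by
        refine Finset.sum_le_sum fun a _ => ?_
        rw [← div_eq_mul_inv, inv_eq_one_div, div_le_div_iff₀ (by positivity) (by positivity)]
        exact_mod_cast (by nlinarith : 1 * (1 + N * a) ≤ N * (a + 1))
    _ = N * harmonicProgression N m := by rw [harmonicProgression, Finset.mul_sum]

/- The multiples of `k` in the progression are dominated termwise by `k` times the progression,
through `a ↦ a / k`. -/
theorem sum_filter_dvd_inv_le (N m : ℕ) {k : ℕ} (hk : 1 ≤ k) :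
    ∑ a ∈ (Finset.range m).filter (k ∣ 1 + N * ·), ((1 + N * a : ℕ) : ℝ)⁻¹ ≤
      (k : ℝ)⁻¹ * harmonicProgression N m := by
  have hinj : Set.InjOn (· / k) ((Finset.range m).filter (k ∣ 1 + N * ·) : Set ℕ) := by
    intro a ha b hb hab
    have hka : k ∣ 1 + N * a := (Finset.mem_filter.1 ha).2
    have hkb : k ∣ 1 + N * b := (Finset.mem_filter.1 hb).2
    have hcop : k.gcd N = 1 := Nat.dvd_one.1 <|
      (Nat.dvd_add_left ((Nat.gcd_dvd_right k N).mul_right a)).1 ((Nat.gcd_dvd_left k N).trans hka)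
    have hmod : a ≡ b [MOD k] := by
      refine Nat.ModEq.cancel_left_of_coprime hcop (Nat.ModEq.add_left_cancel' 1 ?_)
      exact ((Nat.modEq_zero_iff_dvd).2 hka).trans ((Nat.modEq_zero_iff_dvd).2 hkb).symm
    rw [← Nat.div_add_mod a k, ← Nat.div_add_mod b k, hmod, show a / k = b / k from hab]
  have hterm : ∀ a ∈ (Finset.range m).filter (k ∣ 1 + N * ·),
      ((1 + N * a : ℕ) : ℝ)⁻¹ ≤ (k : ℝ)⁻¹ * ((1 + N * (a / k) : ℕ) : ℝ)⁻¹ := by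
    intro a ha
    have hsplit : 1 + N * a = (1 + N * (a % k)) + k * (N * (a / k)) := by
      conv_lhs => rw [← Nat.div_add_mod a k]
      ring
    have hk_le : k ≤ 1 + N * (a % k) :=
      Nat.le_of_dvd (by omega)
        ((Nat.dvd_add_left (Nat.dvd_mul_right k _)).1 (hsplit ▸ (Finset.mem_filter.1 ha).2))
    rw [← mul_inv]
    refine inv_anti₀ (by positivity) ?_
    exact_mod_cast (by rw [hsplit]; nlinarith : k * (1 + N * (a / k)) ≤ 1 + N * a)
  rw [harmonicProgression, Finset.mul_sum]
  calc _ ≤ ∑ a ∈ (Finset.range m).filter (k ∣ 1 + N * ·),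
        (k : ℝ)⁻¹ * ((1 + N * (a / k) : ℕ) : ℝ)⁻¹ := Finset.sum_le_sum hterm
    _ = ∑ b ∈ ((Finset.range m).filter (k ∣ 1 + N * ·)).image (· / k),
        (k : ℝ)⁻¹ * ((1 + N * b : ℕ) : ℝ)⁻¹ :=
        (Finset.sum_image (f := fun b => (k : ℝ)⁻¹ * ((1 + N * b : ℕ) : ℝ)⁻¹) hinj).symm
    _ ≤ _ := by
        refine Finset.sum_le_sum_of_subset_of_nonneg ?_ fun _ _ _ => by positivity
        refine Finset.image_subset_iff.2 fun a ha => Finset.mem_range.2 ?_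
        exact (Nat.div_le_self a k).trans_lt (Finset.mem_range.1 (Finset.mem_filter.1 ha).1)

theorem inv_sub_sum_dvd_le_totient_div_sq {e R : ℕ} (he : 1 ≤ e) (heR : e ≤ R) :
    (e : ℝ)⁻¹ - ∑ k ∈ Finset.Icc 2 R, (if k ∣ e then (k : ℝ)⁻¹ * (e : ℝ)⁻¹ else 0) ≤
      (e.totient : ℝ) / (e : ℝ) ^ 2 := by
  have hdivisors : e.divisors.erase 1 = (Finset.Icc 2 R).filter (· ∣ e) := by
    ext k
    simp only [Finset.mem_erase, Nat.mem_divisors, Finset.mem_filter, Finset.mem_Icc]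
    constructor
    · rintro ⟨hk1, hke, -⟩
      have hk0 := Nat.pos_of_dvd_of_pos hke he
      exact ⟨⟨by omega, (Nat.le_of_dvd he hke).trans heR⟩, hke⟩
    · rintro ⟨⟨hk2, -⟩, hke⟩
      exact ⟨by omega, hke, by omega⟩
  have htotient := sub_sum_divisors_erase_one_le_totient e
  rw [hdivisors] at htotient
  rw [← Finset.sum_filter, le_div_iff₀ (by positivity)]
  refine le_trans (le_of_eq ?_) htotient
  rw [sub_mul, Finset.sum_mul]
  congr 1
  · field_simp
  · exact Finset.sum_congr rfl fun k _ => by field_simp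

theorem harmonicProgression_le_four_mul_sum_totient (N m : ℕ) :
    harmonicProgression N m ≤
      4 * ∑ a ∈ Finset.range m, ((1 + N * a).totient : ℝ) / ((1 + N * a : ℕ) : ℝ) ^ 2 := by
  set H := harmonicProgression N m
  have hnonneg : 0 ≤ H := harmonicProgression_nonneg N m
  have hcorrection : ∑ a ∈ Finset.range m, ∑ k ∈ Finset.Icc 2 (1 + N * m),
      (if k ∣ 1 + N * a then (k : ℝ)⁻¹ * ((1 + N * a : ℕ) : ℝ)⁻¹ else 0) ≤ 3 / 4 * H := by
    rw [Finset.sum_comm]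
    calc _ ≤ ∑ k ∈ Finset.Icc 2 (1 + N * m), ((k : ℝ) ^ 2)⁻¹ * H := by
          refine Finset.sum_le_sum fun k hk => ?_
          have hk1 : 1 ≤ k := one_le_two.trans (Finset.mem_Icc.1 hk).1
          rw [← Finset.sum_filter, ← Finset.mul_sum, sq, mul_inv, mul_assoc]
          gcongr
          exact sum_filter_dvd_inv_le N m hk1
      _ ≤ 3 / 4 * H := by
          rw [← Finset.sum_mul]
          gcongr
          exact sum_Icc_two_inv_sq_le _
  have hmain := Finset.sum_le_sum fun a (ha : a ∈ Finset.range m) =>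
    inv_sub_sum_dvd_le_totient_div_sq (Nat.le_add_right 1 (N * a))
      (Nat.add_le_add_left (Nat.mul_le_mul_left N (Finset.mem_range.1 ha).le) 1)
  rw [Finset.sum_sub_distrib] at hmain
  change H - _ ≤ _ at hmain
  linarith

end TotientSums

section LowerBound

variable {ι : Type*} [Fintype ι] [DecidableEq ι] {s₀ : ι → ℤ} {k N : ℕ}

theorem sum_filter_dvd_totient_le_weight (hN : N ≠ 0) {m n : ℕ} (hmn : N * m ≤ n) (c : ℕ) :
    ∑ a ∈ (Finset.range m).filter (1 + N * · ∣ c), (1 + N * a).totient ≤ weight n c := by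
  have hN1 : 1 ≤ N := Nat.one_le_iff_ne_zero.2 hN
  rcases eq_or_ne c 0 with rfl | hc
  · have hterm : ∀ a ∈ (Finset.range m).filter (1 + N * · ∣ 0), (1 + N * a).totient ≤ n := by
      intro a ha
      have ham := Finset.mem_range.1 (Finset.mem_filter.1 ha).1
      exact (Nat.totient_le _).trans (by nlinarith)
    have hcard : ((Finset.range m).filter (1 + N * · ∣ 0)).card ≤ n :=
      (Finset.card_filter_le _ _).trans (by rw [Finset.card_range]; nlinarith)
    rw [weight_zero, sq]
    exact (Finset.sum_le_card_nsmul _ _ n hterm).trans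
      ((Nat.mul_le_mul_right n hcard).trans (Nat.le_succ _))
  · have hinj : Function.Injective fun a => 1 + N * a := fun a b hab =>
      Nat.eq_of_mul_eq_mul_left hN1 (Nat.add_left_cancel hab)
    rw [weight_of_ne_zero n hc, ← Finset.sum_image (f := Nat.totient) hinj.injOn]
    refine le_trans (Finset.sum_le_sum_of_subset fun e he => ?_) (Nat.sum_totient c).le
    obtain ⟨a, ha, rfl⟩ := Finset.mem_image.1 he
    exact Nat.mem_divisors.2 ⟨(Finset.mem_filter.1 ha).2, hc⟩

/- If `e = 1 + N a` then `s₀ + N (a s₀ + e j) = e (s₀ + N j)`. -/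
theorem card_box_div_le_card_filter_dvd_affineGcd (hs₀ : s₀ ∈ box ι k) {a R n : ℕ}
    (hn : a * k + R ≤ n) :
    (box ι (R / (1 + N * a))).card ≤
      ((box ι n).filter (1 + N * a ∣ affineGcd s₀ N ·)).card := by
  have hscaled : a • s₀ ∈ box ι (a * k) := by
    simpa using add_smul_mem_box (k := 0) (s₀ := 0) (N := a) (mem_box.2 fun i => by simp) hs₀
  refine Finset.card_le_card_of_injOn (fun j => a • s₀ + (1 + N * a) • j) (fun j hj => ?_)
    (add_smul_injective (a • s₀) (by omega)).injOn
  have hle : a * k + (1 + N * a) * (R / (1 + N * a)) ≤ n :=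
    (Nat.add_le_add_left (Nat.mul_div_le R _) _).trans hn
  refine Finset.mem_coe.2 (Finset.mem_filter.2 ⟨box_mono hle (add_smul_mem_box hscaled hj), ?_⟩)
  refine dvd_vecGcd fun i => ⟨s₀ i + N * j i, ?_⟩
  simp only [Pi.add_apply, Pi.smul_apply]
  simp only [nsmul_eq_mul]
  push_cast
  ring

theorem sum_totient_mul_card_box_le_weightSum (hs₀ : s₀ ∈ box ι k) (hN : N ≠ 0) (m : ℕ) :
    ∑ a ∈ Finset.range m, (1 + N * a).totient * (box ι (N * m / (1 + N * a))).card ≤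
      weightSum (affineGcd s₀ N) ((k + 1) * N * m) := by
  set n := (k + 1) * N * m with hn
  have hNm : N * m ≤ n := by nlinarith [Nat.zero_le (k * (N * m))]
  have hbound : ∀ a ∈ Finset.range m, a * k + N * m ≤ n := by
    intro a ha
    have ham : a ≤ N * m :=
      (Finset.mem_range.1 ha).le.trans (Nat.le_mul_of_pos_left m (Nat.pos_of_ne_zero hN))
    nlinarith [Nat.mul_le_mul_right k ham]
  calc _ ≤ ∑ a ∈ Finset.range m, ∑ s ∈ box ι n,
        (if 1 + N * a ∣ affineGcd s₀ N s then (1 + N * a).totient else 0) := by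
        refine Finset.sum_le_sum fun a ha => ?_
        rw [← Finset.sum_filter, Finset.sum_const, smul_eq_mul, mul_comm]
        exact Nat.mul_le_mul_right _
          (card_box_div_le_card_filter_dvd_affineGcd hs₀ (hbound a ha))
    _ = ∑ s ∈ box ι n, ∑ a ∈ (Finset.range m).filter (1 + N * · ∣ affineGcd s₀ N s),
        (1 + N * a).totient := by
        rw [Finset.sum_comm]
        exact Finset.sum_congr rfl fun s _ => (Finset.sum_filter _ _).symm
    _ ≤ weightSum (affineGcd s₀ N) n :=
        Finset.sum_le_sum fun s _ => sum_filter_dvd_totient_le_weight hN hNm _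

theorem sq_mul_log_le_weightSum (hι : Fintype.card ι = 2) (hs₀ : s₀ ∈ box ι k) (hN : N ≠ 0)
    (m : ℕ) :
    (m : ℝ) ^ 2 * Real.log m ≤ 4 * weightSum (affineGcd s₀ N) ((k + 1) * N * m) := by
  have hN1 : (1 : ℝ) ≤ N := by exact_mod_cast Nat.one_le_iff_ne_zero.2 hN
  have hterm : ∀ a ∈ Finset.range m,
      ((N * m : ℕ) : ℝ) ^ 2 * (((1 + N * a).totient : ℝ) / ((1 + N * a : ℕ) : ℝ) ^ 2) ≤
        ((1 + N * a).totient * (box ι (N * m / (1 + N * a))).card : ℕ) := by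
    intro a _
    have hquot : ((N * m : ℕ) : ℝ) / (1 + N * a : ℕ) ≤ (2 * (N * m / (1 + N * a)) + 1 : ℕ) := by
      rw [div_le_iff₀ (by positivity)]
      have hlt := Nat.lt_mul_div_succ (N * m) (show 0 < 1 + N * a by omega)
      exact_mod_cast hlt.le.trans ((mul_comm _ _).trans_le
        (Nat.mul_le_mul_right (1 + N * a) (show _ + 1 ≤ 2 * (N * m / (1 + N * a)) + 1 by omega)))
    calc _ = ((1 + N * a).totient : ℝ) * (((N * m : ℕ) : ℝ) / (1 + N * a : ℕ)) ^ 2 := by ring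
      _ ≤ (1 + N * a).totient * ((2 * (N * m / (1 + N * a)) + 1 : ℕ) : ℝ) ^ 2 := by gcongr
      _ = _ := by rw [card_box, hι]; push_cast; rfl
  have hsum : ((N * m : ℕ) : ℝ) ^ 2 * (harmonicProgression N m / 4) ≤
      weightSum (affineGcd s₀ N) ((k + 1) * N * m) :=
    calc _ ≤ ((N * m : ℕ) : ℝ) ^ 2 * ∑ a ∈ Finset.range m,
          ((1 + N * a).totient : ℝ) / ((1 + N * a : ℕ) : ℝ) ^ 2 := by
          gcongr
          linarith [harmonicProgression_le_four_mul_sum_totient N m]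
      _ ≤ _ := by
          rw [Finset.mul_sum]
          refine (Finset.sum_le_sum hterm).trans ?_
          exact_mod_cast sum_totient_mul_card_box_le_weightSum hs₀ hN m
  calc (m : ℝ) ^ 2 * Real.log m
      ≤ (m : ℝ) ^ 2 * (N * harmonicProgression N m) := by
        gcongr
        exact log_le_mul_harmonicProgression (Nat.one_le_iff_ne_zero.2 hN) m
    _ ≤ (m : ℝ) ^ 2 * (N ^ 2 * harmonicProgression N m) := by
        have := harmonicProgression_nonneg N m
        gcongr
        nlinarith
    _ = 4 * (((N * m : ℕ) : ℝ) ^ 2 * (harmonicProgression N m / 4)) := by push_cast; ring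
    _ ≤ _ := by gcongr

theorem sq_le_weightSum_affineGcd (hι : Fintype.card ι = 1) (hs₀ : s₀ ∈ box ι k) (hN : N ≠ 0)
    (n : ℕ) : n * n ≤ weightSum (affineGcd s₀ N) (2 * n + k) := by
  obtain ⟨i, hi⟩ := Fintype.card_eq_one_iff.1 hι
  have hconst : Function.Injective fun j : ℕ => fun _ : ι => (j : ℤ) := fun a b hab =>
    Nat.cast_injective (R := ℤ) (congrFun hab i)
  have hcard : ((Finset.Ioc (n + k) (2 * n + k)).image
      fun j : ℕ => fun _ : ι => (j : ℤ)).card = n := by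
    rw [Finset.card_image_of_injective _ hconst, Nat.card_Ioc]
    omega
  refine (congrArg (· * n) hcard).symm.trans_le ?_
  refine card_nsmul_le_weightSum (fun s hs => ?_) fun s hs => ?_ <;>
    obtain ⟨j, hj, rfl⟩ := Finset.mem_image.1 hs <;> rw [Finset.mem_Ioc] at hj
  · exact mem_box.2 fun _ => by rw [Nat.abs_cast]; exact_mod_cast hj.2
  · refine le_trans ?_ (le_weight _ _)
    have hge : (n : ℤ) ≤ s₀ i + N * j := by
      have := neg_le_of_abs_le (mem_box.1 hs₀ i)
      have : j ≤ N * j := Nat.le_mul_of_pos_left j (Nat.pos_of_ne_zero hN)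
      zify at this hj
      linarith
    have hdvd : (s₀ i + N * j).natAbs ∣ affineGcd s₀ N fun _ => j :=
      dvd_vecGcd fun i' => by simp [hi i']
    rcases Nat.eq_zero_or_pos n with rfl | _
    · exact Nat.zero_le _
    have hne : affineGcd s₀ N (fun _ => (j : ℤ)) ≠ 0 := fun hzero => by
      have := congrFun (vecGcd_eq_zero_iff.1 hzero) i
      simp only [Pi.add_apply, Pi.smul_apply, Pi.zero_apply] at this
      rw [nsmul_eq_mul] at this
      omega
    have hle := Nat.le_of_dvd (Nat.pos_of_ne_zero hne) hdvd
    omega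

theorem scaleLE_weightSum_affineGcd_of_card_one (hι : Fintype.card ι = 1) (s₀ : ι → ℤ)
    (hN : N ≠ 0) :
    ScaleLE (fun n => (n : ℝ) * n) (fun n => (weightSum (affineGcd s₀ N) n : ℝ)) := by
  obtain ⟨k, hk⟩ := exists_mem_box s₀
  refine ⟨1, 2 + k, by omega, fun n hn => ?_⟩
  have hle : 2 * n + k ≤ (2 + k) * n := by nlinarith
  rw [Nat.cast_one, one_mul]
  beta_reduce
  exact_mod_cast (sq_le_weightSum_affineGcd hι hk hN n).trans (weightSum_mono _ hle)

theorem scaleLE_pow_mul_gcdGrowth_weightSum (s₀ : ι → ℤ) (hN : N ≠ 0) :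
    ScaleLE (fun n => (n : ℝ) ^ Fintype.card ι * gcdGrowth (Fintype.card ι) n)
      (fun n => (weightSum (affineGcd s₀ N) n : ℝ)) := by
  obtain ⟨k, hk⟩ := exists_mem_box s₀
  rcases hι : Fintype.card ι with _ | _ | _ | r
  · have := Fintype.card_eq_zero_iff.1 hι
    refine .of_le_mul 1 fun n _ => ?_
    have hgcd : ∀ s, affineGcd s₀ N s = 0 := fun s => vecGcd_eq_zero_iff.2 (Subsingleton.elim _ _)
    have hle : n ^ 2 ≤ weightSum (affineGcd s₀ N) n := by
      simpa [card_box, hι] using card_nsmul_le_weightSum (subset_refl (box ι n)) fun s _ =>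
        show n ^ 2 ≤ weight n (affineGcd s₀ N s) by rw [hgcd, weight_zero]; exact Nat.le_succ _
    simpa [gcdGrowth] using (mod_cast hle : (n : ℝ) ^ 2 ≤ weightSum (affineGcd s₀ N) n)
  · simpa [gcdGrowth] using scaleLE_weightSum_affineGcd_of_card_one hι s₀ hN
  · refine ⟨4, (k + 1) * N, Nat.mul_pos k.succ_pos (Nat.pos_of_ne_zero hN), fun n _ => ?_⟩
    exact sq_mul_log_le_weightSum hι hk hN n
  · refine .of_le_mul 1 fun n _ => ?_
    rw [gcdGrowth, mul_one, Nat.cast_one, one_mul]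
    exact_mod_cast hι ▸ pow_card_le_weightSum (affineGcd s₀ N) n

theorem scaleEquiv_weightSum_affineGcd (s₀ : ι → ℤ) (hN : N ≠ 0) :
    ScaleEquiv (fun n => (weightSum (affineGcd s₀ N) n : ℝ))
      (fun n => (n : ℝ) ^ Fintype.card ι * gcdGrowth (Fintype.card ι) n) :=
  ⟨scaleLE_weightSum_affineGcd s₀ hN, scaleLE_pow_mul_gcdGrowth_weightSum s₀ hN⟩

end LowerBound

/-! ### Lattices -/

section Lattices

theorem exists_smul_leftInverse_of_injective {R P F : Type*} [CommRing R] [IsDomain R]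
    [IsPrincipalIdealRing R] [AddCommGroup P] [Module R P] [AddCommGroup F] [Module R F]
    [Module.Free R F] [Module.Finite R F] {f : P →ₗ[R] F} (hf : Function.Injective f) :
    ∃ m : R, m ≠ 0 ∧ ∃ f' : F →ₗ[R] P, ∀ x, f' (f x) = m • x := by
  classical
  obtain ⟨k, snf⟩ := Submodule.smithNormalForm (Module.Free.chooseBasis R F) (LinearMap.range f)
  let e := LinearEquiv.ofInjective f hf
  let b := snf.bN.map e.symm
  have hb : ∀ i, f (b i) = snf.a i • snf.bM (snf.f i) := fun i => by
    rw [← snf.snf, Module.Basis.map_apply]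
    exact congrArg Subtype.val (e.apply_symm_apply (snf.bN i))
  have ha : ∀ i, snf.a i ≠ 0 := fun i hi =>
    b.ne_zero i (hf (by rw [hb, hi, zero_smul, map_zero]))
  let f' : F →ₗ[R] P := snf.bM.constr R fun j =>
    ∑ i, if snf.f i = j then (∏ l ∈ Finset.univ.erase i, snf.a l) • b i else 0
  refine ⟨∏ i, snf.a i, Finset.prod_ne_zero_iff.2 fun i _ => ha i, f', fun x => ?_⟩
  suffices h : f' ∘ₗ f = (∏ i, snf.a i) • LinearMap.id from LinearMap.congr_fun h x
  refine b.ext fun i => ?_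
  simp [f', hb, smul_smul, Finset.mul_prod_erase]

theorem exists_nsmul_leftInverse_of_injective {P F : Type*} [AddCommGroup P] [AddCommGroup F]
    [Module.Free ℤ F] [Module.Finite ℤ F] {f : P →ₗ[ℤ] F} (hf : Function.Injective f) :
    ∃ m : ℕ, m ≠ 0 ∧ ∃ f' : F →ₗ[ℤ] P, ∀ x, f' (f x) = m • x := by
  obtain ⟨m, hm, f', hf'⟩ := exists_smul_leftInverse_of_injective hf
  refine ⟨m.natAbs, Int.natAbs_ne_zero.2 hm, m.sign • f', fun x => ?_⟩
  rw [LinearMap.smul_apply, hf', smul_smul, Int.sign_mul_self_eq_natAbs, natCast_zsmul]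

theorem exists_coordinates_of_linearMap {R Q F : Type*} [CommRing R] [IsDomain R]
    [IsPrincipalIdealRing R] [AddCommGroup Q] [Module R Q] [Module.Free R Q] [Module.Finite R Q]
    [AddCommGroup F] [Module R F] [Module.Free R F] (f : Q →ₗ[R] F) :
    ∃ (r t : ℕ) (e : Q ≃ₗ[R] (Fin r ⊕ Fin t → R)) (B : (Fin r → R) →ₗ[R] F),
      Function.Injective B ∧ ∀ q, f q = B (e q ∘ Sum.inl) := by
  obtain ⟨l, hl⟩ := Module.projective_lifting_property f.rangeRestrict LinearMap.id
    f.surjective_rangeRestrict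
  have hexact : Function.Exact (LinearMap.ker f).subtype f.rangeRestrict := fun q => by
    simp [Subtype.ext_iff]
  obtain ⟨e, -, he⟩ := hexact.splitSurjectiveEquiv (Submodule.subtype_injective _) ⟨l, hl⟩
  let bRange := (Module.finBasis R (LinearMap.range f)).equivFun
  let bKer := (Module.finBasis R (LinearMap.ker f)).equivFun
  refine ⟨_, _, e.trans (LinearEquiv.prodComm R _ _) |>.trans (bRange.prodCongr bKer) |>.trans
    (LinearEquiv.sumArrowLequivProdArrow _ _ R R).symm,
    (LinearMap.range f).subtype ∘ₗ bRange.symm.toLinearMap,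
    (Submodule.subtype_injective _).comp bRange.symm.injective, fun q => ?_⟩
  have hq : f q = (e q).2 := congrArg Subtype.val (LinearMap.congr_fun he q)
  exact hq.trans (congrArg Subtype.val (bRange.symm_apply_apply (e q).2).symm)

theorem finrank_quotient_of_le_torsion {R M : Type*} [CommRing R] [AddCommGroup M] [Module R M]
    {N : Submodule R M} (hN : N ≤ Submodule.torsion R M) :
    Module.finrank R (M ⧸ N) = Module.finrank R M := by
  rw [Module.finrank, Module.finrank, rank_quotient_eq_of_le_torsion hN]

theorem finrank_range_of_ker_le_torsion {R M F : Type*} [CommRing R] [AddCommGroup M] [Module R M]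
    [AddCommGroup F] [Module R F] {f : M →ₗ[R] F}
    (hf : LinearMap.ker f ≤ Submodule.torsion R M) :
    Module.finrank R (LinearMap.range f) = Module.finrank R M := by
  rw [← f.quotKerEquivRange.finrank_eq, finrank_quotient_of_le_torsion hf]

variable {A : Type*} [AddCommGroup A]

/-- The isolator of a subgroup `M` of an abelian group: the elements with a nonzero multiple
in `M`. -/
noncomputable def isolator (M : Submodule ℤ A) : Submodule ℤ A :=
  (Submodule.torsion ℤ (A ⧸ M)).comap M.mkQ

theorem le_isolator (M : Submodule ℤ A) : M ≤ isolator M := fun a ha => by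
  rw [isolator, Submodule.mem_comap, Submodule.mkQ_apply, (Submodule.Quotient.mk_eq_zero M).2 ha]
  exact zero_mem _

variable [Module.Finite ℤ A]

theorem exists_finite_representatives_isolator (M : Submodule ℤ A) :
    ∃ T : Finset A, (∀ q ∈ T, q ∈ isolator M) ∧ ∀ a ∈ isolator M, ∃ q ∈ T, a - q ∈ M := by
  classical
  have : Finite (Submodule.torsion ℤ (A ⧸ M)) :=
    Module.finite_of_fg_torsion _ Submodule.torsion_isTorsion
  have := Fintype.ofFinite (Submodule.torsion ℤ (A ⧸ M))
  choose lift hlift using M.mkQ_surjective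
  refine ⟨Finset.univ.image fun t : Submodule.torsion ℤ (A ⧸ M) => lift t, ?_, fun a ha => ?_⟩
  · intro q hq
    obtain ⟨t, -, rfl⟩ := Finset.mem_image.1 hq
    rw [isolator, Submodule.mem_comap, hlift]
    exact t.2
  · refine ⟨lift (M.mkQ a), Finset.mem_image.2 ⟨⟨M.mkQ a, ha⟩, Finset.mem_univ _, rfl⟩, ?_⟩
    rw [← (Submodule.Quotient.mk_eq_zero M), ← Submodule.mkQ_apply, map_sub, hlift, sub_self]

theorem exists_coordinates_mod_isolator {F : Type*} [AddCommGroup F] [Module.Free ℤ F]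
    {M : Submodule ℤ A} {f : A →ₗ[ℤ] F} (hf : M ≤ LinearMap.ker f) :
    ∃ (r t : ℕ) (p : A →ₗ[ℤ] (Fin r ⊕ Fin t → ℤ)) (B : (Fin r → ℤ) →ₗ[ℤ] F),
      r + t = Module.finrank ℤ A - Module.finrank ℤ M ∧ Function.Surjective p ∧
      LinearMap.ker p = isolator M ∧ Function.Injective B ∧ ∀ a, f a = B (p a ∘ Sum.inl) := by
  let q : A →ₗ[ℤ] (A ⧸ M) ⧸ Submodule.torsion ℤ (A ⧸ M) :=
    (Submodule.torsion ℤ (A ⧸ M)).mkQ ∘ₗ M.mkQ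
  have htorsion : Submodule.torsion ℤ (A ⧸ M) ≤ LinearMap.ker (M.liftQ f hf) := by
    rintro x ⟨k, hk⟩
    have := congrArg (M.liftQ f hf) hk
    rw [Submonoid.smul_def, map_smul, map_zero] at this
    exact (smul_eq_zero.1 this).resolve_left (nonZeroDivisors.coe_ne_zero k)
  obtain ⟨r, t, e, B, hB, hfB⟩ := exists_coordinates_of_linearMap
    ((Submodule.torsion ℤ (A ⧸ M)).liftQ (M.liftQ f hf) htorsion)
  refine ⟨r, t, e.toLinearMap ∘ₗ q, B, ?_, ?_, ?_, hB, fun a => hfB (q a)⟩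
  · have hrank := e.finrank_eq
    rw [finrank_quotient_of_le_torsion le_rfl, Module.finrank_fintype_fun_eq_card, Fintype.card_sum,
      Fintype.card_fin, Fintype.card_fin] at hrank
    have := Submodule.finrank_quotient_add_finrank M
    omega
  · exact e.surjective.comp ((Submodule.mkQ_surjective _).comp (Submodule.mkQ_surjective _))
  · rw [LinearMap.ker_comp, LinearEquiv.ker, Submodule.comap_bot, LinearMap.ker_comp,
      Submodule.ker_mkQ, isolator]

end Lattices

section Commensurate

/-- Two functions to `ℕ` that agree up to a multiplicative constant; they then vanish at the same
points. -/
def Commensurate {α : Type*} (f g : α → ℕ) : Prop :=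
  ∃ C, 1 ≤ C ∧ ∀ x, f x ≤ C * g x ∧ g x ≤ C * f x

theorem le_mul_of_dvd_mul_of_dvd_mul {a b C : ℕ} (hC : C ≠ 0) (hab : a ∣ C * b) (hba : b ∣ C * a) :
    a ≤ C * b := by
  rcases eq_or_ne b 0 with rfl | hb
  · rw [zero_dvd_iff, mul_eq_zero, or_iff_right hC] at hba
    simp [hba]
  · exact Nat.le_of_dvd (Nat.pos_of_ne_zero (mul_ne_zero hC hb)) hab

theorem Commensurate.of_dvd {α : Type*} {f g : α → ℕ} {C : ℕ} (hC : C ≠ 0)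
    (hfg : ∀ x, f x ∣ C * g x) (hgf : ∀ x, g x ∣ C * f x) : Commensurate f g :=
  ⟨C, Nat.one_le_iff_ne_zero.2 hC, fun x =>
    ⟨le_mul_of_dvd_mul_of_dvd_mul hC (hfg x) (hgf x),
      le_mul_of_dvd_mul_of_dvd_mul hC (hgf x) (hfg x)⟩⟩

theorem Commensurate.one_of_dvd {α : Type*} {f : α → ℕ} {C : ℕ} (hC : C ≠ 0) (hf : ∀ x, f x ∣ C) :
    Commensurate f 1 :=
  .of_dvd hC (fun x => by simpa using hf x) fun _ => one_dvd _

theorem Commensurate.trans {α : Type*} {f g h : α → ℕ} :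
    Commensurate f g → Commensurate g h → Commensurate f h := by
  rintro ⟨C, hC, hfg⟩ ⟨D, hD, hgh⟩
  refine ⟨C * D, Nat.mul_pos hC hD, fun x => ⟨?_, ?_⟩⟩
  · rw [mul_assoc]
    exact (hfg x).1.trans (Nat.mul_le_mul_left C (hgh x).1)
  · rw [mul_comm C, mul_assoc]
    exact (hgh x).2.trans (Nat.mul_le_mul_left D (hfg x).2)

theorem Commensurate.comp {α β : Type*} {f g : α → ℕ} (h : Commensurate f g) (u : β → α) :
    Commensurate (f ∘ u) (g ∘ u) :=
  let ⟨C, hC, hfg⟩ := h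
  ⟨C, hC, fun x => hfg (u x)⟩

end Commensurate

section AffineGcd

variable {ι κ : Type*} [Fintype ι] [Fintype κ]

theorem vecGcd_smul (m : ℕ) (w : ι → ℤ) : vecGcd (m • w) = m * vecGcd w := by
  simp [vecGcd, Int.natAbs_mul, Finset.gcd_mul_left]

theorem vecGcd_dvd_vecGcd_map (L : (ι → ℤ) →ₗ[ℤ] (κ → ℤ)) (w : ι → ℤ) :
    vecGcd w ∣ vecGcd (L w) := by
  choose w' hw' using vecGcd_dvd w
  have hw : w = (vecGcd w : ℤ) • w' := funext hw'
  refine dvd_vecGcd fun i => ⟨L w' i, ?_⟩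
  conv_lhs => rw [hw]
  rw [map_smul, Pi.smul_apply, smul_eq_mul]

/- With `B' B = m`, the endomorphism `φ = m - B B'` kills the image of `B`. If `φ τ = 0`, then
`m (τ + B s) = B (B' τ + m s)`; otherwise the gcd of `τ + B s` divides that of `φ τ`. -/
theorem commensurate_vecGcd_add_map {B : (ι → ℤ) →ₗ[ℤ] (κ → ℤ)} (hB : Function.Injective B)
    (τ : κ → ℤ) :
    (∃ s₀ N, N ≠ 0 ∧ Commensurate (fun s => vecGcd (τ + B s)) (affineGcd s₀ N)) ∨
      Commensurate (fun s => vecGcd (τ + B s)) 1 := by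
  obtain ⟨m, hm, B', hB'⟩ := exists_nsmul_leftInverse_of_injective hB
  let φ : (κ → ℤ) →ₗ[ℤ] (κ → ℤ) := m • LinearMap.id - B ∘ₗ B'
  have hφ : ∀ s, φ (τ + B s) = φ τ := fun s => by
    rw [map_add, add_eq_left, LinearMap.sub_apply, LinearMap.comp_apply, hB', map_nsmul]
    exact sub_self _
  by_cases hτ : φ τ = 0
  · refine .inl ⟨B' τ, m, hm, ?_⟩
    have hmul : ∀ s, m • (τ + B s) = B (B' τ + m • s) := fun s => by
      rw [smul_add, map_add, map_nsmul, show m • τ = B (B' τ) from sub_eq_zero.1 hτ]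
    refine .of_dvd hm (fun s => ?_) fun s => ?_
    · calc vecGcd (τ + B s) ∣ vecGcd (B (B' τ + m • s)) := by
            rw [← hmul, vecGcd_smul]
            exact dvd_mul_left _ _
        _ ∣ vecGcd (B' (B (B' τ + m • s))) := vecGcd_dvd_vecGcd_map B' _
        _ = m * affineGcd (B' τ) m s := by rw [hB', vecGcd_smul, affineGcd]
    · rw [← vecGcd_smul, hmul]
      exact vecGcd_dvd_vecGcd_map B _
  · refine .inr (.one_of_dvd (mt vecGcd_eq_zero_iff.1 hτ) fun s => ?_)
    exact hφ s ▸ vecGcd_dvd_vecGcd_map φ (τ + B s)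

theorem exists_commensurate_scaleEquiv_weightSum [DecidableEq ι]
    {B : (ι → ℤ) →ₗ[ℤ] (κ → ℤ)} (hB : Function.Injective B) (τ : κ → ℤ) :
    ∃ (c : (ι → ℤ) → ℕ) (d : ℕ), Commensurate (fun s => vecGcd (τ + B s)) c ∧
      (∃ C, ∀ n, 1 ≤ n → ∀ s ∈ box ι n, c s ≤ C * n) ∧
      ScaleEquiv (fun n => weightSum c n) (fun n => (n : ℝ) ^ Fintype.card ι * gcdGrowth d n) := by
  rcases commensurate_vecGcd_add_map hB τ with ⟨s₀, N, hN, hcomm⟩ | hcomm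
  · obtain ⟨k, hk⟩ := exists_mem_box s₀
    exact ⟨affineGcd s₀ N, Fintype.card ι, hcomm, ⟨k + N, fun n hn s hs => affineGcd_le hk hn hs⟩,
      scaleEquiv_weightSum_affineGcd s₀ hN⟩
  · refine ⟨fun _ => 1, 3, hcomm, ⟨1, fun n hn s _ => by simpa using hn⟩, ?_⟩
    simpa only [gcdGrowth, mul_one] using scaleEquiv_weightSum_one

end AffineGcd

/-! ### Additive functions on groups -/

section IsAdditive

/-- Homomorphisms from a multiplicative group to an additive one. -/
def IsAdditive {G B : Type*} [Group G] [AddCommGroup B] (f : G → B) : Prop :=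
  ∀ g h, f (g * h) = f g + f h

namespace IsAdditive

variable {G B : Type*} [Group G] [AddCommGroup B] {f : G → B}

/-- An additive function as a bundled homomorphism to a multiplicative copy of its codomain. -/
def toMonoidHom (hf : IsAdditive f) : G →* Multiplicative B := .mk' (fun g => .ofAdd (f g)) hf

theorem map_one (hf : IsAdditive f) : f 1 = 0 := _root_.map_one hf.toMonoidHom

theorem map_inv (hf : IsAdditive f) (g : G) : f g⁻¹ = -f g := _root_.map_inv hf.toMonoidHom g

theorem map_zpow (hf : IsAdditive f) (g : G) (i : ℤ) : f (g ^ i) = i • f g :=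
  _root_.map_zpow hf.toMonoidHom g i

theorem map_list_prod (hf : IsAdditive f) (l : List G) : f l.prod = (l.map f).sum :=
  _root_.map_list_prod hf.toMonoidHom l

theorem linearMap_comp (hf : IsAdditive f) {F : Type*} [AddCommGroup F] (p : B →ₗ[ℤ] F) :
    IsAdditive fun g => p (f g) := fun g h => (congrArg p (hf g h)).trans (map_add p _ _)

/-- The image of a subgroup under an additive function, as a `ℤ`-submodule. -/
def map (hf : IsAdditive f) (H : Subgroup G) : Submodule ℤ B :=
  AddSubgroup.toIntSubmodule (Subgroup.toAddSubgroup' (H.map hf.toMonoidHom))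

theorem mem_map (hf : IsAdditive f) {H : Subgroup G} {b : B} :
    b ∈ hf.map H ↔ ∃ g ∈ H, f g = b := Iff.rfl

/-- The range of an additive function, as a `ℤ`-submodule. -/
def range (hf : IsAdditive f) : Submodule ℤ B := hf.map ⊤

theorem mem_range (hf : IsAdditive f) {b : B} : b ∈ hf.range ↔ ∃ g, f g = b := by
  simp [range, mem_map]

variable {S : Finset G} (hgen : Subgroup.closure (S : Set G) = ⊤) {ι : Type*} [Fintype ι]
  [DecidableEq ι]
include hgen

theorem exists_wordNorm_le_of_box (hf : IsAdditive f) (v : ι → G) :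
    ∃ C, ∀ n, ∀ k ∈ box ι n, ∃ w, f w = ∑ i, k i • f (v i) ∧ wordNorm S w ≤ C * n := by
  refine ⟨∑ i, wordNorm S (v i), fun n k hk => ?_⟩
  suffices ∀ s : Finset ι, ∃ w, f w = ∑ i ∈ s, k i • f (v i) ∧
      wordNorm S w ≤ (∑ i ∈ s, wordNorm S (v i)) * n from this Finset.univ
  intro s
  induction s using Finset.induction_on with
  | empty => exact ⟨1, by simp [hf.map_one], by simp [wordNorm_one]⟩
  | insert j s hj ih =>
    obtain ⟨w, hw, hwn⟩ := ih
    have hkj : (k j).natAbs ≤ n := natAbs_le_of_mem_box hk j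
    refine ⟨v j ^ k j * w, by rw [hf, hf.map_zpow, hw, Finset.sum_insert hj], ?_⟩
    rw [Finset.sum_insert hj, add_mul]
    refine (wordNorm_mul_le hgen _ _).trans (add_le_add ?_ hwn)
    calc wordNorm S (v j ^ k j) ≤ (k j).natAbs * wordNorm S (v j) := wordNorm_zpow_le hgen _ _
      _ ≤ wordNorm S (v j) * n := by rw [mul_comm]; gcongr

theorem exists_mem_box_wordNorm {u : G → ι → ℤ} (hu : IsAdditive u) :
    ∃ C, ∀ g, u g ∈ box ι (C * wordNorm S g) := by
  choose C hC using fun i => exists_natAbs_le_mul_wordNorm hgen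
    (f := fun g => u g i) fun g h => congrFun (hu g h) i
  refine ⟨∑ i, C i, fun g => mem_box.2 fun i => ?_⟩
  have hCi : C i ≤ ∑ i, C i := Finset.single_le_sum (fun _ _ => Nat.zero_le _) (Finset.mem_univ i)
  rw [Int.abs_eq_natAbs]
  exact_mod_cast (hC i g).trans (Nat.mul_le_mul_right _ hCi)

theorem exists_wordNorm_le_of_surjective {u : G → ι → ℤ} (hu : IsAdditive u)
    (hsurj : Function.Surjective u) :
    ∃ C, ∀ n, ∀ s ∈ box ι n, ∃ x, u x = s ∧ wordNorm S x ≤ C * n := by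
  choose v hv using fun i => hsurj (Pi.single i 1)
  obtain ⟨C, hC⟩ := hu.exists_wordNorm_le_of_box hgen v
  refine ⟨C, fun n s hs => ?_⟩
  obtain ⟨x, hx, hxn⟩ := hC n s hs
  refine ⟨x, ?_, hxn⟩
  rw [hx]
  simp only [hv]
  exact (pi_eq_sum_univ' s).symm

theorem exists_wordNorm_le_of_mem_range [Module.Free ℤ B] [Module.Finite ℤ B] {h : G → B}
    (hf : IsAdditive f) (hh : IsAdditive h) :
    ∃ C, ∀ g, h g ∈ hf.range → ∃ w, f w = h g ∧ wordNorm S w ≤ C * wordNorm S g := by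
  let b := Module.finBasis ℤ hf.range
  obtain ⟨m, hm, f', hf'⟩ :=
    exists_nsmul_leftInverse_of_injective (f := hf.range.subtype) Subtype.val_injective
  choose v hv using fun i => hf.mem_range.1 (b i).2
  obtain ⟨C, hC⟩ := hf.exists_wordNorm_le_of_box hgen v
  obtain ⟨D, hD⟩ := (hh.linearMap_comp
    (b.equivFun.toLinearMap ∘ₗ f')).exists_mem_box_wordNorm hgen
  refine ⟨C * D, fun g hg => ?_⟩
  obtain ⟨c, hc⟩ : ∃ c : hf.range, c = h g := ⟨⟨_, hg⟩, rfl⟩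
  have hbox : b.equivFun c ∈ box _ (D * wordNorm S g) := by
    refine mem_box.2 fun i => ?_
    have hmul : b.equivFun (f' (h g)) i = m * b.equivFun c i := by
      rw [← hc]
      simp [show f' c = m • c from hf' c]
    calc |b.equivFun c i| ≤ m * |b.equivFun c i| :=
          le_mul_of_one_le_left (abs_nonneg _) (mod_cast Nat.one_le_iff_ne_zero.2 hm)
      _ = |b.equivFun (f' (h g)) i| := by rw [hmul, abs_mul, Nat.abs_cast]
      _ ≤ _ := mem_box.1 (hD g) i
  obtain ⟨w, hw, hwn⟩ := hC _ _ hbox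
  refine ⟨w, ?_, hwn.trans_eq (mul_assoc _ _ _).symm⟩
  rw [hw, ← hc]
  simp only [hv]
  exact_mod_cast congrArg Subtype.val (b.sum_equivFun c)

end IsAdditive

end IsAdditive

theorem exists_base_expansion {t i : ℤ} (ht : t ≠ 0) {n : ℕ} (hn : 1 ≤ n)
    (hi : i.natAbs ≤ n ^ 2) :
    ∃ a b r : ℤ, a.natAbs ≤ n ∧ b.natAbs ≤ n ∧ r.natAbs ≤ t.natAbs ∧
      i = n * a * t + 1 * b * t + r := by
  let q := i.tdiv t
  have hq : q.natAbs ≤ n ^ 2 :=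
    (Int.natAbs_tdiv i t).trans_le ((Nat.div_le_self _ _).trans hi)
  refine ⟨q.tdiv n, q.tmod n, i.tmod t, ?_, ?_, ?_, ?_⟩
  · rw [Int.natAbs_tdiv, Int.natAbs_natCast]
    exact Nat.div_le_of_le_mul (hq.trans_eq (sq n))
  · rw [Int.natAbs_tmod, Int.natAbs_natCast]
    exact (Nat.mod_lt _ hn).le
  · rw [Int.natAbs_tmod]
    exact (Nat.mod_lt _ (Int.natAbs_pos.2 ht)).le
  · linear_combination -Int.mul_tdiv_add_tmod i t - t * Int.mul_tdiv_add_tmod q n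

/-! ### Central extensions by an infinite cyclic group -/

/-- A central extension of `A` by the infinite cyclic group generated by `z`. -/
structure CyclicCentralExtension (G A : Type*) [Group G] [AddCommGroup A] where
  proj : G → A
  z : G
  isAdditive_proj : IsAdditive proj
  proj_surjective : Function.Surjective proj
  proj_eq_zero_iff : ∀ g, proj g = 0 ↔ g ∈ Subgroup.zpowers z
  commute_z : ∀ g, Commute g z
  zpow_injective : Function.Injective fun i : ℤ => z ^ i

namespace CyclicCentralExtension

variable {G A : Type*} [Group G] [AddCommGroup A] (E : CyclicCentralExtension G A)

theorem proj_zpow (i : ℤ) : E.proj (E.z ^ i) = 0 :=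
  (E.proj_eq_zero_iff _).2 (zpow_mem (Subgroup.mem_zpowers E.z) i)

theorem proj_mul_zpow (g : G) (i : ℤ) : E.proj (g * E.z ^ i) = E.proj g := by
  rw [E.isAdditive_proj, proj_zpow, add_zero]

theorem exists_eq_mul_zpow {g h : G} (hgh : E.proj g = E.proj h) : ∃ i : ℤ, g = h * E.z ^ i := by
  have hker : E.proj (h⁻¹ * g) = 0 := by
    rw [E.isAdditive_proj, E.isAdditive_proj.map_inv, hgh, neg_add_cancel]
  obtain ⟨i, hi⟩ := (E.proj_eq_zero_iff _).1 hker
  exact ⟨i, (mul_eq_of_eq_inv_mul hi).symm⟩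

theorem mul_zpow_mul (g h : G) (i : ℤ) : g * E.z ^ i * h = g * h * E.z ^ i := by
  rw [mul_assoc, ← ((E.commute_z h).zpow_right i).eq, mul_assoc]

theorem exists_linearMap_proj_eq {B : Type*} [AddCommGroup B] {f : G → B} (hf : IsAdditive f)
    (hz : f E.z = 0) : ∃ F : A →ₗ[ℤ] B, ∀ g, F (E.proj g) = f g := by
  have hfactor {g h : G} (hgh : E.proj g = E.proj h) : f g = f h := by
    obtain ⟨i, rfl⟩ := E.exists_eq_mul_zpow hgh
    rw [hf, hf.map_zpow, hz, smul_zero, add_zero]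
  choose s hs using E.proj_surjective
  refine ⟨(AddMonoidHom.mk' (fun a => f (s a)) fun a b => ?_).toIntLinearMap,
    fun g => hfactor (hs _)⟩
  rw [← hf]
  exact hfactor (by rw [E.isAdditive_proj, hs, hs, hs])

theorem exists_mul_eq_mul_mul_zpow (g h : G) : ∃ i : ℤ, g * h = h * g * E.z ^ i :=
  E.exists_eq_mul_zpow (by rw [E.isAdditive_proj, E.isAdditive_proj, add_comm])

/-- The commutator form: the exponent `i` with `g * h = h * g * z ^ i`. -/
noncomputable def comm (g h : G) : ℤ := (E.exists_mul_eq_mul_mul_zpow g h).choose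

theorem mul_eq_mul_zpow_comm (g h : G) : g * h = h * g * E.z ^ E.comm g h :=
  (E.exists_mul_eq_mul_mul_zpow g h).choose_spec

theorem comm_eq {g h : G} {i : ℤ} (hi : g * h = h * g * E.z ^ i) : E.comm g h = i :=
  E.zpow_injective (mul_left_cancel ((E.mul_eq_mul_zpow_comm g h).symm.trans hi))

theorem comm_swap (g h : G) : E.comm h g = -E.comm g h :=
  E.comm_eq (by rw [E.mul_eq_mul_zpow_comm g h, zpow_neg, mul_inv_cancel_right])

theorem comm_mul_left (g g' h : G) : E.comm (g * g') h = E.comm g h + E.comm g' h := by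
  refine E.comm_eq ?_
  rw [mul_assoc, E.mul_eq_mul_zpow_comm g' h, ← mul_assoc, ← mul_assoc, E.mul_eq_mul_zpow_comm g h,
    mul_zpow_mul, zpow_add, mul_assoc h g g', mul_assoc]

theorem isAdditive_comm_left (h : G) : IsAdditive fun g => E.comm g h :=
  fun g g' => E.comm_mul_left g g' h

theorem isAdditive_comm_right (g : G) : IsAdditive (E.comm g) := fun h h' => by
  rw [E.comm_swap, comm_mul_left, neg_add, ← comm_swap, ← comm_swap]

theorem comm_z_right (g : G) : E.comm g E.z = 0 :=
  E.comm_eq (by rw [zpow_zero, mul_one, E.commute_z g])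

theorem comm_congr_left {g g' : G} (hgg' : E.proj g = E.proj g') (h : G) :
    E.comm g h = E.comm g' h := by
  obtain ⟨i, rfl⟩ := E.exists_eq_mul_zpow hgg'
  rw [E.comm_swap, E.isAdditive_comm_right, (E.isAdditive_comm_right h).map_zpow, comm_z_right,
    smul_zero, add_zero, ← comm_swap]

theorem comm_zpow_zpow (g h : G) (a b : ℤ) : E.comm (g ^ a) (h ^ b) = a * b * E.comm g h := by
  rw [(E.isAdditive_comm_right _).map_zpow, (E.isAdditive_comm_left h).map_zpow, smul_eq_mul,
    smul_eq_mul]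
  ring

theorem natAbs_comm_prod_le {l : List G} {h : G} {K : ℕ} (hl : ∀ g ∈ l, (E.comm g h).natAbs ≤ K) :
    (E.comm l.prod h).natAbs ≤ l.length * K := by
  induction l with
  | nil => simp [(E.isAdditive_comm_left h).map_one]
  | cons g l ih =>
    rw [List.prod_cons, comm_mul_left, List.length_cons, add_one_mul, add_comm]
    exact (Int.natAbs_add_le _ _).trans (add_le_add
      (ih fun g hg => hl g (List.mem_cons_of_mem _ hg)) (hl g List.mem_cons_self))

theorem exists_prod_ofFn_mul_prod_ofFn {d K : ℕ} {u v : Fin d → G}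
    (huv : ∀ i j, (E.comm (u i) (v j)).natAbs ≤ K) :
    ∃ t : ℤ, t.natAbs ≤ d ^ 2 * K ∧
      (List.ofFn u).prod * (List.ofFn v).prod = (List.ofFn (u * v)).prod * E.z ^ t := by
  induction d with
  | zero => exact ⟨0, by simp, by simp⟩
  | succ d ih =>
    obtain ⟨t, ht, htail⟩ := ih (u := fun i => u i.succ) (v := fun i => v i.succ)
      fun i j => huv _ _
    simp only [List.ofFn_succ, List.prod_cons]
    set U := (List.ofFn fun i => u i.succ).prod
    set V := (List.ofFn fun i => v i.succ).prod
    have hU : (E.comm U (v 0)).natAbs ≤ d * K := by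
      simpa using E.natAbs_comm_prod_le (l := List.ofFn fun i => u i.succ) (h := v 0) (K := K)
        (by simp [List.mem_ofFn, huv])
    refine ⟨t + E.comm U (v 0), (Int.natAbs_add_le _ _).trans (by nlinarith), ?_⟩
    calc u 0 * U * (v 0 * V) = u 0 * (U * v 0) * V := by simp only [mul_assoc]
      _ = u 0 * v 0 * (U * V) * E.z ^ E.comm U (v 0) := by
        rw [E.mul_eq_mul_zpow_comm U (v 0), ← mul_assoc, mul_zpow_mul]
        simp only [mul_assoc]
      _ = _ := by
        rw [htail, zpow_add]
        simp only [mul_assoc, Pi.mul_apply]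
        rfl

theorem exists_normalForm [Module.Free ℤ A] [Module.Finite ℤ A] :
    ∃ (d : ℕ) (e : Fin d → G) (κ : G → Fin d → ℤ), IsAdditive κ ∧ (∀ i : ℤ, κ (E.z ^ i) = 0) ∧
      ∀ g, ∃ i : ℤ, g = (List.ofFn fun j => e j ^ κ g j).prod * E.z ^ i := by
  let b := Module.finBasis ℤ A
  choose e he using fun j => E.proj_surjective (b j)
  let κ (g : G) := b.equivFun (E.proj g)
  have hproj (g : G) : E.proj g = E.proj (List.ofFn fun j => e j ^ κ g j).prod := by
    rw [E.isAdditive_proj.map_list_prod, List.map_ofFn, List.sum_ofFn]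
    simp only [Function.comp_apply, E.isAdditive_proj.map_zpow, he]
    exact (b.sum_equivFun _).symm
  exact ⟨_, e, κ, E.isAdditive_proj.linearMap_comp b.equivFun.toLinearMap,
    fun i => by simp [κ, proj_zpow], fun g => E.exists_eq_mul_zpow (hproj g)⟩

variable {S : Finset G} (hgen : Subgroup.closure (S : Set G) = ⊤)
include hgen

theorem exists_height [Module.Free ℤ A] [Module.Finite ℤ A] :
    ∃ (φ : G → ℤ) (K : ℕ), (∀ i : ℤ, φ (E.z ^ i) = i) ∧
      ∀ g h, (φ (g * h) - φ g - φ h).natAbs ≤ K * (wordNorm S g * wordNorm S h) := by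
  obtain ⟨d, e, κ, hκ, hκz, hnormal⟩ := E.exists_normalForm
  choose φ hφ using hnormal
  obtain ⟨C, hC⟩ := hκ.exists_mem_box_wordNorm hgen
  let W : ℕ := ∑ i, ∑ j, (E.comm (e i) (e j)).natAbs
  refine ⟨φ, d ^ 2 * (C * C * W), fun i => ?_, fun g h => ?_⟩
  · exact E.zpow_injective (by simpa [hκz] using (hφ (E.z ^ i)).symm)
  have hcomm (i j : Fin d) : (E.comm (e i ^ κ g i) (e j ^ κ h j)).natAbs ≤
      C * wordNorm S g * (C * wordNorm S h) * W := by
    have hW : (E.comm (e i) (e j)).natAbs ≤ W :=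
      (Finset.single_le_sum (fun _ _ => Nat.zero_le _) (Finset.mem_univ j)).trans
        (Finset.single_le_sum (f := fun i => ∑ j, (E.comm (e i) (e j)).natAbs)
          (fun _ _ => Nat.zero_le _) (Finset.mem_univ i))
    rw [comm_zpow_zpow, Int.natAbs_mul, Int.natAbs_mul]
    gcongr
    exacts [natAbs_le_of_mem_box (hC g) i, natAbs_le_of_mem_box (hC h) j]
  obtain ⟨t, ht, hprod⟩ := E.exists_prod_ofFn_mul_prod_ofFn hcomm
  have hφt : φ (g * h) = φ g + φ h + t := by
    refine E.zpow_injective (mul_left_cancel ((hφ (g * h)).symm.trans ?_))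
    calc g * h = _ := congrArg₂ (· * ·) (hφ g) (hφ h)
      _ = (List.ofFn fun i => e i ^ κ g i).prod * (List.ofFn fun i => e i ^ κ h i).prod *
          E.z ^ (φ g + φ h) := by
        rw [← mul_assoc, mul_zpow_mul, mul_assoc, ← zpow_add]
      _ = (List.ofFn fun i => e i ^ κ (g * h) i).prod * E.z ^ (φ g + φ h + t) := by
        rw [hprod, mul_assoc, ← zpow_add, add_comm t, hκ]
        simp only [Pi.add_apply, zpow_add]
        rfl
  calc (φ (g * h) - φ g - φ h).natAbs = t.natAbs := by rw [hφt]; ring_nf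
    _ ≤ d ^ 2 * (C * wordNorm S g * (C * wordNorm S h) * W) := ht
    _ = _ := by ring

theorem exists_natAbs_le_mul_wordNorm_zpow_sq [Module.Free ℤ A] [Module.Finite ℤ A] :
    ∃ C, ∀ i : ℤ, i.natAbs ≤ C * wordNorm S (E.z ^ i) ^ 2 := by
  obtain ⟨φ, K, hφz, hφ⟩ := E.exists_height hgen
  obtain ⟨C, hC⟩ := exists_le_mul_wordNorm_sq hgen (ℓ := fun g => (φ g).natAbs) (K := K)
    (by simpa using hφz 0) fun g h => by
      have := hφ g h
      omega
  exact ⟨C, fun i => by simpa only [hφz] using hC (E.z ^ i)⟩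

theorem wordNorm_zpow_mul_comm_le (x y : G) (a b : ℤ) :
    wordNorm S (E.z ^ (a * b * E.comm x y)) ≤
      2 * (a.natAbs * wordNorm S x + b.natAbs * wordNorm S y) := by
  have hz : E.z ^ (a * b * E.comm x y) = (y ^ b * x ^ a)⁻¹ * (x ^ a * y ^ b) := by
    rw [E.mul_eq_mul_zpow_comm (x ^ a), comm_zpow_zpow, inv_mul_cancel_left]
  have hx := wordNorm_zpow_le hgen x a
  have hy := wordNorm_zpow_le hgen y b
  have hyx := (wordNorm_inv_le hgen _).trans (wordNorm_mul_le hgen (y ^ b) (x ^ a))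
  have hxy := wordNorm_mul_le hgen (x ^ a) (y ^ b)
  rw [hz]
  exact (wordNorm_mul_le hgen _ _).trans (by omega)

theorem exists_wordNorm_zpow_le (hnc : ∃ x y : G, x * y ≠ y * x) :
    ∃ C, ∀ n, 1 ≤ n → ∀ i : ℤ, i.natAbs ≤ n ^ 2 → wordNorm S (E.z ^ i) ≤ C * n := by
  obtain ⟨x, y, hxy⟩ := hnc
  let t := E.comm x y
  have ht : t ≠ 0 := fun h => hxy (by rw [E.mul_eq_mul_zpow_comm x y, show E.comm x y = 0 from h,
    zpow_zero, mul_one])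
  let m := wordNorm S x + wordNorm S y
  have hball (n : ℕ) (a b : ℤ) (ha : a.natAbs ≤ n) (hb : b.natAbs ≤ n) :
      wordNorm S (E.z ^ (a * b * t)) ≤ 2 * (n * m) := by
    refine (E.wordNorm_zpow_mul_comm_le hgen x y a b).trans ?_
    rw [mul_add n]
    gcongr
  refine ⟨4 * m + t.natAbs * wordNorm S E.z, fun n hn i hi => ?_⟩
  obtain ⟨a, b, r, ha, hb, hr, rfl⟩ := exists_base_expansion ht hn hi
  have hrem : wordNorm S (E.z ^ r) ≤ t.natAbs * wordNorm S E.z * n :=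
    calc wordNorm S (E.z ^ r) ≤ r.natAbs * wordNorm S E.z := wordNorm_zpow_le hgen _ _
      _ ≤ t.natAbs * wordNorm S E.z := by gcongr
      _ ≤ _ := Nat.le_mul_of_pos_right _ hn
  rw [zpow_add, zpow_add]
  calc _ ≤ wordNorm S (E.z ^ (n * a * t)) + wordNorm S (E.z ^ (1 * b * t)) +
        wordNorm S (E.z ^ r) :=
        (wordNorm_mul_le hgen _ _).trans (Nat.add_le_add_right (wordNorm_mul_le hgen _ _) _)
    _ ≤ 2 * (n * m) + 2 * (n * m) + t.natAbs * wordNorm S E.z * n := by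
        gcongr
        exacts [hball n n a (by simp) ha, hball n 1 b (by simpa using hn) hb]
    _ = (4 * m + t.natAbs * wordNorm S E.z) * n := by ring

end CyclicCentralExtension

/-! ### Twisted conjugacy -/

section TwistedConjugacy

variable {G : Type*} [Group G] {ψ : G ≃* G}

theorem TwistedConj.refl (ψ : G ≃* G) (x : G) : TwistedConj ψ x x := ⟨1, by simp⟩

theorem TwistedConj.symm {x y : G} : TwistedConj ψ x y → TwistedConj ψ y x := by
  rintro ⟨g, rfl⟩
  exact ⟨g⁻¹, by simp [mul_assoc]⟩

theorem TwistedConj.trans {x y w : G} :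
    TwistedConj ψ x y → TwistedConj ψ y w → TwistedConj ψ x w := by
  rintro ⟨g, rfl⟩ ⟨h, rfl⟩
  exact ⟨h * g, by simp [mul_assoc]⟩

/-- The `ψ`-twisted conjugacy class of `x`. -/
def twistedClass (ψ : G ≃* G) (x : G) : Set G := {y | TwistedConj ψ x y}

theorem twistedClass_eq_iff {x y : G} :
    twistedClass ψ x = twistedClass ψ y ↔ TwistedConj ψ x y := by
  refine ⟨fun h => ?_, fun h => Set.ext fun w => ⟨h.symm.trans, h.trans⟩⟩
  have hy : y ∈ twistedClass ψ x := h ▸ TwistedConj.refl ψ y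
  exact hy

variable {S : Finset G}

theorem finite_twistedClass_image (hgen : Subgroup.closure (S : Set G) = ⊤) (ψ : G ≃* G) (n : ℕ) :
    (twistedClass ψ '' {g | wordNorm S g ≤ n}).Finite :=
  (finite_setOf_wordNorm_le hgen n).image _

theorem twistedGrowth_mono (hgen : Subgroup.closure (S : Set G) = ⊤) (ψ : G ≃* G) :
    Monotone (twistedGrowth ψ S) := fun _ m hnm =>
  Set.ncard_le_ncard (Set.image_mono fun _ hg => le_trans hg hnm)
    (finite_twistedClass_image hgen ψ m)

end TwistedConjugacy

theorem mem_iff_index_dvd (H : AddSubgroup ℤ) (i : ℤ) : i ∈ H ↔ (H.index : ℤ) ∣ i := by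
  obtain ⟨a, ha⟩ := Int.subgroup_cyclic H
  rw [ha, ← AddSubgroup.zmultiples_eq_closure, Int.index_zmultiples, Int.natAbs_dvd,
    Int.mem_zmultiples_iff]

namespace CyclicCentralExtension

variable {G A : Type*} [Group G] [AddCommGroup A] (E : CyclicCentralExtension G A) (ψ : G ≃* G)

theorem twisted_mul_zpow (g x : G) (i : ℤ) :
    g * (x * E.z ^ i) * (ψ g)⁻¹ = g * x * (ψ g)⁻¹ * E.z ^ i := by
  rw [← mul_assoc, mul_zpow_mul]

theorem twistedConj_mul_zpow_iff {x y : G} (i : ℤ) :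
    TwistedConj ψ (x * E.z ^ i) (y * E.z ^ i) ↔ TwistedConj ψ x y := by
  simp only [TwistedConj, twisted_mul_zpow, mul_left_inj]

/-- The shifts `i` along `⟨z⟩` for which `x * z ^ i` is twisted conjugate to `x`. -/
def twistShifts (x : G) : AddSubgroup ℤ where
  carrier := {i | TwistedConj ψ x (x * E.z ^ i)}
  zero_mem' := by simpa using TwistedConj.refl ψ x
  add_mem' {i j} hi hj := by
    refine hj.trans ?_
    rw [zpow_add, ← mul_assoc]
    exact (E.twistedConj_mul_zpow_iff ψ j).2 hi
  neg_mem' {i} hi := by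
    have := (E.twistedConj_mul_zpow_iff ψ (-i)).2 hi.symm
    rwa [mul_assoc, ← zpow_add, add_neg_cancel, zpow_zero, mul_one] at this

/-- The number of twisted conjugacy classes meeting the coset of `⟨z⟩` through `x`, with the
value `0` when there are infinitely many. -/
noncomputable def fibreIndex (x : G) : ℕ := (E.twistShifts ψ x).index

theorem twistedConj_mul_zpow_self_iff (x : G) (i : ℤ) :
    TwistedConj ψ x (x * E.z ^ i) ↔ (E.fibreIndex ψ x : ℤ) ∣ i :=
  mem_iff_index_dvd (E.twistShifts ψ x) i

theorem twistedConj_mul_zpow_mul_zpow_iff (x : G) (i j : ℤ) :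
    TwistedConj ψ (x * E.z ^ i) (x * E.z ^ j) ↔ (E.fibreIndex ψ x : ℤ) ∣ j - i := by
  rw [← twistedConj_mul_zpow_self_iff, ← E.twistedConj_mul_zpow_iff ψ (x := x) i,
    mul_assoc x (_ ^ (j - i)), ← zpow_add, sub_add_cancel]

/-- The displacement of `g` under the automorphism induced by `ψ` on the quotient. -/
def displacement (g : G) : A := E.proj g - E.proj (ψ g)

theorem isAdditive_displacement : IsAdditive (E.displacement ψ) := fun g h => by
  simp only [displacement, map_mul, E.isAdditive_proj _ _]
  abel

/-- The lattice of displacements of `ψ`, the image of `id - ψ̄` on the quotient. -/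
def displacementLattice : Submodule ℤ A := (E.isAdditive_displacement ψ).range

theorem displacement_mem (g : G) : E.displacement ψ g ∈ E.displacementLattice ψ :=
  (E.isAdditive_displacement ψ).mem_range.2 ⟨g, rfl⟩

theorem proj_twisted (g x : G) :
    E.proj (g * x * (ψ g)⁻¹) = E.proj x + E.displacement ψ g := by
  rw [E.isAdditive_proj, E.isAdditive_proj, E.isAdditive_proj.map_inv, displacement]
  abel

theorem proj_sub_proj_mem_of_twistedConj {ψ : G ≃* G} {x y : G} (h : TwistedConj ψ x y) :
    E.proj y - E.proj x ∈ E.displacementLattice ψ := by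
  obtain ⟨g, rfl⟩ := h
  rw [proj_twisted, add_sub_cancel_left]
  exact E.displacement_mem ψ g

variable {ψ}

theorem displacement_eq_zero_of_twisted_eq {g x : G} {i : ℤ}
    (h : g * x * (ψ g)⁻¹ = x * E.z ^ i) : E.displacement ψ g = 0 := by
  have := E.proj_twisted ψ g x
  rwa [h, proj_mul_zpow, left_eq_add] at this

theorem twisted_eq_mul_zpow {g : G} {i : ℤ} (hg : g = ψ g * E.z ^ i) (x : G) :
    g * x * (ψ g)⁻¹ = x * E.z ^ (i + E.comm g x) :=
  calc g * x * (ψ g)⁻¹ = x * g * (ψ g)⁻¹ * E.z ^ E.comm g x := by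
        rw [E.mul_eq_mul_zpow_comm g x, mul_zpow_mul]
    _ = x * (ψ g * E.z ^ i) * (ψ g)⁻¹ * E.z ^ E.comm g x := by rw [← hg]
    _ = x * E.z ^ (i + E.comm g x) := by
        rw [← mul_assoc, mul_zpow_mul, mul_inv_cancel_right, mul_assoc, zpow_add]

variable (ψ) in
/-- The elements whose twisted action shifts `x` along `⟨z⟩` by a multiple of `e`. -/
def shiftDvdSubgroup (x : G) (e : ℤ) : Subgroup G where
  carrier := {g | ∃ i : ℤ, g * x * (ψ g)⁻¹ = x * E.z ^ i ∧ e ∣ i}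
  one_mem' := ⟨0, by simp, dvd_zero e⟩
  mul_mem' := by
    rintro g h ⟨i, hi, hei⟩ ⟨j, hj, hej⟩
    refine ⟨i + j, ?_, dvd_add hei hej⟩
    calc g * h * x * (ψ (g * h))⁻¹ = g * (h * x * (ψ h)⁻¹) * (ψ g)⁻¹ := by simp [mul_assoc]
      _ = x * E.z ^ (i + j) := by rw [hj, twisted_mul_zpow, hi, mul_assoc, zpow_add]
  inv_mem' := by
    rintro g ⟨i, hi, hei⟩
    refine ⟨-i, ?_, dvd_neg.2 hei⟩
    calc g⁻¹ * x * (ψ g⁻¹)⁻¹ = g⁻¹ * (x * E.z ^ i) * (ψ g⁻¹)⁻¹ * E.z ^ (-i) := by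
          rw [twisted_mul_zpow, mul_assoc _ (E.z ^ i), ← zpow_add, add_neg_cancel, zpow_zero,
            mul_one]
      _ = x * E.z ^ (-i) := by rw [← hi]; simp [mul_assoc]

theorem exists_le_closure_range_sup_zpowers [Module.Finite ℤ A] (K : Subgroup G) :
    ∃ (l : ℕ) (k : Fin l → G), (∀ i, k i ∈ K) ∧
      K ≤ Subgroup.closure (Set.range k) ⊔ Subgroup.zpowers E.z := by
  have hπ := E.isAdditive_proj
  obtain ⟨l, a, ha⟩ := Submodule.fg_iff_exists_fin_generating_family.1
    (IsNoetherian.noetherian (hπ.map K))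
  have haK (i : Fin l) : a i ∈ hπ.map K := ha ▸ Submodule.subset_span ⟨i, rfl⟩
  choose k hkK hka using fun i => hπ.mem_map.1 (haK i)
  have hspan : hπ.map K ≤ hπ.map (Subgroup.closure (Set.range k)) := by
    rw [← ha, Submodule.span_le]
    rintro _ ⟨i, rfl⟩
    exact hπ.mem_map.2 ⟨k i, Subgroup.subset_closure ⟨i, rfl⟩, hka i⟩
  refine ⟨l, k, hkK, fun g hg => ?_⟩
  obtain ⟨h, hh, hgh⟩ := hπ.mem_map.1 (hspan (hπ.mem_map.2 ⟨g, hg, rfl⟩))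
  obtain ⟨j, rfl⟩ := E.exists_eq_mul_zpow hgh.symm
  exact Subgroup.mul_mem_sup hh (zpow_mem (Subgroup.mem_zpowers _) j)

theorem comm_map_map (hψ : ψ E.z = E.z) (g h : G) : E.comm (ψ g) (ψ h) = E.comm g h :=
  E.comm_eq (by rw [← map_mul, E.mul_eq_mul_zpow_comm g h, map_mul, map_mul, map_zpow, hψ])

theorem exists_fibreIndex_eq_vecGcd [Module.Finite ℤ A] (hψ : ψ E.z = E.z) :
    ∃ (l : ℕ) (τ : Fin l → ℤ) (v : A →ₗ[ℤ] (Fin l → ℤ)),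
      E.displacementLattice ψ ≤ LinearMap.ker v ∧
      ∀ x, E.fibreIndex ψ x = vecGcd (τ + v (E.proj x)) := by
  obtain ⟨l, k, hk, hgens⟩ :=
    E.exists_le_closure_range_sup_zpowers (E.isAdditive_displacement ψ).toMonoidHom.ker
  have hkψ (i : Fin l) : E.proj (k i) = E.proj (ψ (k i)) := sub_eq_zero.1 (hk i)
  choose τ hτ using fun i => E.exists_eq_mul_zpow (hkψ i)
  obtain ⟨v, hv⟩ := E.exists_linearMap_proj_eq (f := fun g i => E.comm (k i) g)
    (fun g h => funext fun i => E.isAdditive_comm_right (k i) g h)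
    (funext fun i => E.comm_z_right (k i))
  have hshift (x : G) (i : Fin l) :
      k i * x * (ψ (k i))⁻¹ = x * E.z ^ (τ + v (E.proj x)) i := by
    rw [hv]
    exact E.twisted_eq_mul_zpow (hτ i) x
  refine ⟨l, τ, v, ?_, fun x => Nat.dvd_antisymm (dvd_vecGcd fun i => ?_) ?_⟩
  · rintro _ hd
    obtain ⟨g, rfl⟩ := (E.isAdditive_displacement ψ).mem_range.1 hd
    rw [LinearMap.mem_ker, displacement, map_sub, hv, hv, sub_eq_zero]
    exact funext fun i => by rw [E.comm_congr_left (hkψ i) (ψ g), E.comm_map_map hψ]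
  · exact (E.twistedConj_mul_zpow_self_iff ψ x _).1 ⟨k i, hshift x i⟩
  · set e := vecGcd (τ + v (E.proj x))
    obtain ⟨g, hg⟩ := (E.twistedConj_mul_zpow_self_iff ψ x _).2 dvd_rfl
    have hle : Subgroup.closure (Set.range k) ⊔ Subgroup.zpowers E.z ≤
        E.shiftDvdSubgroup ψ x e := by
      rw [sup_le_iff, Subgroup.closure_le, Subgroup.zpowers_le]
      refine ⟨?_, 0, ?_, dvd_zero _⟩
      · rintro _ ⟨i, rfl⟩
        exact ⟨_, hshift x i, vecGcd_dvd _ i⟩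
      · rw [hψ, zpow_zero, mul_one, ← (E.commute_z x).eq, mul_inv_cancel_right]
    obtain ⟨i, hi, hei⟩ := hle (hgens (E.displacement_eq_zero_of_twisted_eq hg))
    rw [E.zpow_injective (mul_left_cancel (hi.symm.trans hg))] at hei
    exact_mod_cast hei

theorem fibreIndex_dvd_two (hψ : ψ E.z = E.z⁻¹) (x : G) : E.fibreIndex ψ x ∣ 2 := by
  have h : TwistedConj ψ x (x * E.z ^ (2 : ℤ)) := by
    refine ⟨E.z, ?_⟩
    rw [hψ, inv_inv, ← (E.commute_z x).eq, mul_assoc, zpow_two]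
  exact_mod_cast (E.twistedConj_mul_zpow_self_iff ψ x 2).1 h

variable {S : Finset G} (hgen : Subgroup.closure (S : Set G) = ⊤) (ψ)
include hgen

theorem exists_twistedConj_mul_zpow [Module.Free ℤ A] [Module.Finite ℤ A] :
    ∃ K, ∀ g y, E.proj y - E.proj g ∈ E.displacementLattice ψ →
      ∃ j : ℤ, j.natAbs ≤ K * (wordNorm S g + wordNorm S y) ^ 2 ∧
        TwistedConj ψ g (y * E.z ^ j) := by
  obtain ⟨Cw, hCw⟩ := (E.isAdditive_displacement ψ).exists_wordNorm_le_of_mem_range hgen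
    E.isAdditive_proj
  obtain ⟨Cψ, hCψ⟩ := exists_wordNorm_map_le hgen ψ.toMonoidHom
  obtain ⟨Cz, hCz⟩ := E.exists_natAbs_le_mul_wordNorm_zpow_sq hgen
  refine ⟨Cz * (1 + (1 + Cψ) * Cw) ^ 2, fun g y hgy => ?_⟩
  have hproj : E.proj (y * g⁻¹) = E.proj y - E.proj g := by
    rw [E.isAdditive_proj, E.isAdditive_proj.map_inv, sub_eq_add_neg]
  obtain ⟨w, hw, hwn⟩ := hCw (y * g⁻¹) (hproj ▸ hgy)
  have hwn' : wordNorm S w ≤ Cw * (wordNorm S g + wordNorm S y) := by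
    refine hwn.trans (Nat.mul_le_mul_left _ ((wordNorm_mul_le hgen _ _).trans ?_))
    linarith [wordNorm_inv_le hgen g]
  obtain ⟨j, hj⟩ := E.exists_eq_mul_zpow (g := w * g * (ψ w)⁻¹) (h := y)
    (by rw [proj_twisted, hw, hproj, add_sub_cancel])
  have hzj : E.z ^ j = y⁻¹ * (w * g * (ψ w)⁻¹) := by rw [hj, inv_mul_cancel_left]
  have hzn : wordNorm S (E.z ^ j) ≤
      (1 + (1 + Cψ) * Cw) * (wordNorm S g + wordNorm S y) := by
    have hψw : wordNorm S (ψ w) ≤ Cψ * wordNorm S w := hCψ w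
    calc wordNorm S (E.z ^ j)
        ≤ wordNorm S y + (wordNorm S w + wordNorm S g + wordNorm S (ψ w)) := by
          rw [hzj]
          linarith [wordNorm_mul_le hgen y⁻¹ (w * g * (ψ w)⁻¹), wordNorm_inv_le hgen y,
            wordNorm_mul_le hgen (w * g) (ψ w)⁻¹, wordNorm_mul_le hgen w g,
            wordNorm_inv_le hgen (ψ w)]
      _ ≤ (wordNorm S g + wordNorm S y) + (1 + Cψ) * wordNorm S w := by linarith
      _ ≤ (wordNorm S g + wordNorm S y) +
          (1 + Cψ) * (Cw * (wordNorm S g + wordNorm S y)) := by gcongr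
      _ = _ := by ring
  refine ⟨j, (hCz j).trans ?_, w, hj⟩
  rw [mul_assoc, ← mul_pow]
  gcongr

theorem exists_representatives [Module.Free ℤ A] [Module.Finite ℤ A] :
    ∃ T : Finset G, (∀ q ∈ T, E.proj q ∈ isolator (E.displacementLattice ψ)) ∧
      ∀ C, ∃ K, ∀ n, 1 ≤ n → ∀ g x, wordNorm S g ≤ n → wordNorm S x ≤ C * n →
        E.proj x - E.proj g ∈ isolator (E.displacementLattice ψ) →
        ∃ q ∈ T, ∃ j : ℤ, j.natAbs ≤ K * n ^ 2 ∧ TwistedConj ψ g (x * q⁻¹ * E.z ^ j) := by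
  classical
  obtain ⟨T, hT, hTrep⟩ := exists_finite_representatives_isolator (E.displacementLattice ψ)
  choose s hs using E.proj_surjective
  obtain ⟨K, hK⟩ := E.exists_twistedConj_mul_zpow ψ hgen
  let Q := ∑ q ∈ T, wordNorm S (s q)
  refine ⟨T.image s, by simpa [hs] using hT, fun C => ⟨K * (1 + (C + Q)) ^ 2, ?_⟩⟩
  intro n hn g x hg hx hgx
  obtain ⟨q, hq, hqd⟩ := hTrep _ hgx
  obtain ⟨j, hj, hconj⟩ := hK g (x * (s q)⁻¹) (by
    rwa [E.isAdditive_proj, E.isAdditive_proj.map_inv, hs, ← sub_eq_add_neg, sub_right_comm])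
  have hQ : wordNorm S (s q) ≤ Q * n :=
    (Finset.single_le_sum (f := fun q => wordNorm S (s q)) (fun _ _ => Nat.zero_le _) hq).trans
      (Nat.le_mul_of_pos_right _ hn)
  have hnorm : wordNorm S g + wordNorm S (x * (s q)⁻¹) ≤ (1 + (C + Q)) * n := by
    linarith [wordNorm_mul_le hgen x (s q)⁻¹, wordNorm_inv_le hgen (s q)]
  refine ⟨s q, Finset.mem_image_of_mem s hq, j, hj.trans ?_, hconj⟩
  rw [mul_assoc, ← mul_pow]
  gcongr

end CyclicCentralExtension

/-! ### Counting twisted conjugacy classes -/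

namespace CyclicCentralExtension

variable {G A : Type*} [Group G] [AddCommGroup A] (E : CyclicCentralExtension G A) {ψ : G ≃* G}

variable (ψ) in
theorem card_image_twistedClass_mul_zpow_le [DecidableEq (Set G)] (x : G) (K n : ℕ) :
    ((Finset.Icc (-(K * n ^ 2 : ℤ)) (K * n ^ 2)).image
      fun j => twistedClass ψ (x * E.z ^ j)).card ≤ (2 * K + 1) * weight n (E.fibreIndex ψ x) := by
  set c := E.fibreIndex ψ x
  rcases eq_or_ne c 0 with hzero | hne
  · refine Finset.card_image_le.trans ?_
    rw [hzero, weight_zero, Int.card_Icc]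
    zify
    have hK : (0 : ℤ) ≤ K * n ^ 2 := by positivity
    rw [Int.toNat_of_nonneg (by linarith)]
    nlinarith
  · have hpos : (0 : ℤ) < c := by positivity
    have hsub : ((Finset.Icc (-(K * n ^ 2 : ℤ)) (K * n ^ 2)).image
        fun j => twistedClass ψ (x * E.z ^ j)) ⊆
        (Finset.Ico (0 : ℤ) c).image fun j => twistedClass ψ (x * E.z ^ j) := by
      refine Finset.image_subset_iff.2 fun j _ => Finset.mem_image.2 ⟨j % c, ?_, ?_⟩
      · exact Finset.mem_Ico.2 ⟨Int.emod_nonneg _ hpos.ne', Int.emod_lt_of_pos _ hpos⟩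
      · rw [twistedClass_eq_iff, twistedConj_mul_zpow_mul_zpow_iff]
        exact Int.dvd_self_sub_emod
    refine (Finset.card_le_card hsub).trans (Finset.card_image_le.trans ?_)
    rw [Int.card_Ico, sub_zero, Int.toNat_natCast, weight_of_ne_zero n hne]
    exact Nat.le_mul_of_pos_left _ (Nat.succ_pos _)

variable (ψ) in
theorem injOn_twistedClass_mul_zpow (x : G) (n : ℕ) :
    Set.InjOn (fun i : ℕ => twistedClass ψ (x * E.z ^ (i : ℤ)))
      {i | i < weight n (E.fibreIndex ψ x)} := by
  intro i hi j hj hij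
  have hdvd := (E.twistedConj_mul_zpow_mul_zpow_iff ψ x i j).1 (twistedClass_eq_iff.1 hij)
  suffices (j : ℤ) - i = 0 by omega
  rcases eq_or_ne (E.fibreIndex ψ x) 0 with hzero | hne
  · rwa [hzero, Nat.cast_zero, zero_dvd_iff] at hdvd
  · rw [Set.mem_ofPred_eq, weight_of_ne_zero n hne] at hi hj
    exact Int.eq_zero_of_abs_lt_dvd hdvd (by rw [abs_lt]; constructor <;> omega)

theorem sum_weight_fibreIndex_le_twistedGrowth {S : Finset G}
    (hgen : Subgroup.closure (S : Set G) = ⊤) {F : Type*} [AddCommGroup F] {p : A →ₗ[ℤ] F}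
    (hker : E.displacementLattice ψ ≤ LinearMap.ker p) {Q : Finset F} {X : F → G} {n N : ℕ}
    (hX : ∀ s ∈ Q, p (E.proj (X s)) = s)
    (hnorm : ∀ s ∈ Q, ∀ i < weight n (E.fibreIndex ψ (X s)),
      wordNorm S (X s * E.z ^ (i : ℤ)) ≤ N) :
    ∑ s ∈ Q, weight n (E.fibreIndex ψ (X s)) ≤ twistedGrowth ψ S N := by
  let V := Q.sigma fun s => Finset.range (weight n (E.fibreIndex ψ (X s)))
  have hmaps : ∀ v ∈ (V : Set (Σ _ : F, ℕ)),
      twistedClass ψ (X v.1 * E.z ^ (v.2 : ℤ)) ∈ twistedClass ψ '' {g | wordNorm S g ≤ N} := by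
    rintro ⟨s, i⟩ hv
    obtain ⟨hs, hi⟩ := Finset.mem_sigma.1 hv
    exact ⟨_, hnorm s hs i (Finset.mem_range.1 hi), rfl⟩
  have hinj : Set.InjOn (fun v : Σ _ : F, ℕ => twistedClass ψ (X v.1 * E.z ^ (v.2 : ℤ))) V := by
    rintro ⟨s, i⟩ hv ⟨s', i'⟩ hv' heq
    obtain ⟨hs, hi⟩ := Finset.mem_sigma.1 hv
    obtain ⟨hs', hi'⟩ := Finset.mem_sigma.1 hv'
    have hproj := hker (E.proj_sub_proj_mem_of_twistedConj (twistedClass_eq_iff.1 heq))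
    rw [LinearMap.sub_mem_ker_iff, proj_mul_zpow, proj_mul_zpow, hX s hs, hX s' hs'] at hproj
    subst hproj
    exact congrArg (Sigma.mk s') (E.injOn_twistedClass_mul_zpow ψ (X s') n
      (Finset.mem_range.1 hi) (Finset.mem_range.1 hi') heq)
  calc ∑ s ∈ Q, weight n (E.fibreIndex ψ (X s)) = V.card := by
        simp only [V, Finset.card_sigma, Finset.card_range]
    _ ≤ twistedGrowth ψ S N := by
        rw [← Set.ncard_coe_finset]
        exact Set.ncard_le_ncard_of_injOn _ hmaps hinj (finite_twistedClass_image hgen ψ N)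

section Counting

variable {S : Finset G} {ι : Type*} [Fintype ι] [DecidableEq ι] {p : A →ₗ[ℤ] (ι → ℤ)}
  {c : (ι → ℤ) → ℕ} (hgen : Subgroup.closure (S : Set G) = ⊤) (hp : Function.Surjective p)
include hgen hp

theorem exists_representatives_over_box [Module.Free ℤ A] [Module.Finite ℤ A]
    (hker : LinearMap.ker p = isolator (E.displacementLattice ψ)) :
    ∃ C K m : ℕ, 0 < C ∧ ∀ n, 1 ≤ n → ∃ R : (ι → ℤ) → Finset G,
      (∀ s ∈ box ι (C * n), (R s).card ≤ m ∧ ∀ x ∈ R s, p (E.proj x) = s) ∧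
      ∀ g, wordNorm S g ≤ n → ∃ s ∈ box ι (C * n), ∃ x ∈ R s, ∃ j : ℤ,
        j.natAbs ≤ K * n ^ 2 ∧ TwistedConj ψ g (x * E.z ^ j) := by
  classical
  have hadd := E.isAdditive_proj.linearMap_comp p
  obtain ⟨C, hC⟩ := hadd.exists_mem_box_wordNorm hgen
  obtain ⟨D, hD⟩ := hadd.exists_wordNorm_le_of_surjective hgen (hp.comp E.proj_surjective)
  obtain ⟨T, hT, hrep⟩ := E.exists_representatives ψ hgen
  obtain ⟨K, hK⟩ := hrep (D * (C + 1))
  refine ⟨C + 1, K, T.card, C.succ_pos, fun n hn => ?_⟩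
  choose! X hX using hD ((C + 1) * n)
  refine ⟨fun s => T.image fun q => X s * q⁻¹, fun s hs => ⟨Finset.card_image_le, ?_⟩,
    fun g hg => ?_⟩
  · refine Finset.forall_mem_image.2 fun q hq => ?_
    have hqp : p (E.proj q) = 0 := LinearMap.mem_ker.1 (hker ▸ hT q hq)
    rw [E.isAdditive_proj, E.isAdditive_proj.map_inv, map_add, map_neg, hqp, neg_zero, add_zero]
    exact (hX s hs).1
  · have hs : p (E.proj g) ∈ box ι ((C + 1) * n) := box_mono (Nat.mul_le_mul C.le_succ hg) (hC g)
    obtain ⟨hXp, hXn⟩ := hX _ hs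
    obtain ⟨q, hq, j, hj, hconj⟩ := hK n hn g (X (p (E.proj g))) hg
      (hXn.trans_eq (mul_assoc _ _ _).symm) (by rw [← hker, LinearMap.sub_mem_ker_iff]; exact hXp)
    exact ⟨_, hs, _, Finset.mem_image_of_mem _ hq, j, hj, hconj⟩

theorem scaleLE_twistedGrowth_weightSum [Module.Free ℤ A] [Module.Finite ℤ A]
    (hker : LinearMap.ker p = isolator (E.displacementLattice ψ))
    (hc : Commensurate (E.fibreIndex ψ) fun x => c (p (E.proj x))) :
    ScaleLE (fun n => twistedGrowth ψ S n) (fun n => weightSum c n) := by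
  classical
  obtain ⟨C, K, m, hC, hrep⟩ := E.exists_representatives_over_box hgen hp hker
  obtain ⟨L, hL, hcL⟩ := hc
  refine .of_natCast_le (E := m * ((2 * K + 1) * L)) hC fun n hn => ?_
  obtain ⟨R, hR, hcover⟩ := hrep n hn
  let U (x : G) : Finset (Set G) :=
    (Finset.Icc (-(K * n ^ 2 : ℤ)) (K * n ^ 2)).image fun j => twistedClass ψ (x * E.z ^ j)
  have hsub : twistedClass ψ '' {g | wordNorm S g ≤ n} ⊆
      (((box ι (C * n)).biUnion fun s => (R s).biUnion U : Finset (Set G)) : Set (Set G)) := by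
    rintro _ ⟨g, hg, rfl⟩
    obtain ⟨s, hs, x, hx, j, hj, hconj⟩ := hcover g hg
    refine Finset.mem_biUnion.2 ⟨s, hs, Finset.mem_biUnion.2 ⟨x, hx, Finset.mem_image.2
      ⟨j, ?_, (twistedClass_eq_iff.2 hconj).symm⟩⟩⟩
    rw [Finset.mem_Icc, ← abs_le, Int.abs_eq_natAbs]
    exact_mod_cast hj
  have hcard : ∀ s ∈ box ι (C * n),
      ((R s).biUnion U).card ≤ m * ((2 * K + 1) * L) * weight (C * n) (c s) := by
    intro s hs
    refine (Finset.card_biUnion_le_card_mul _ _ ((2 * K + 1) * (L * weight (C * n) (c s)))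
      fun x hx => ?_).trans ?_
    · obtain ⟨hle, hge⟩ : E.fibreIndex ψ x ≤ L * c s ∧ c s ≤ L * E.fibreIndex ψ x :=
        (hR s hs).2 x hx ▸ hcL x
      exact (E.card_image_twistedClass_mul_zpow_le ψ x K n).trans (Nat.mul_le_mul_left _
        (weight_le_mul_weight hL hle hge (Nat.le_mul_of_pos_left n hC)))
    · exact (Nat.mul_le_mul_right _ (hR s hs).1).trans_eq (by ring)
  calc twistedGrowth ψ S n ≤ ((box ι (C * n)).biUnion fun s => (R s).biUnion U).card := by
        rw [← Set.ncard_coe_finset]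
        exact Set.ncard_le_ncard hsub (Finset.finite_toSet _)
    _ ≤ ∑ s ∈ box ι (C * n), m * ((2 * K + 1) * L) * weight (C * n) (c s) :=
        Finset.card_biUnion_le.trans (Finset.sum_le_sum hcard)
    _ = m * ((2 * K + 1) * L) * weightSum c (C * n) := (Finset.mul_sum _ _ _).symm

theorem scaleLE_weightSum_twistedGrowth (hnc : ∃ x y : G, x * y ≠ y * x)
    (hker : E.displacementLattice ψ ≤ LinearMap.ker p)
    (hc : Commensurate (E.fibreIndex ψ) fun x => c (p (E.proj x)))
    (hlin : ∃ B, ∀ n, 1 ≤ n → ∀ s ∈ box ι n, c s ≤ B * n) :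
    ScaleLE (fun n => weightSum c n) (fun n => twistedGrowth ψ S n) := by
  have hadd := E.isAdditive_proj.linearMap_comp p
  obtain ⟨D, hD⟩ := hadd.exists_wordNorm_le_of_surjective hgen (hp.comp E.proj_surjective)
  obtain ⟨Z, hZ⟩ := E.exists_wordNorm_zpow_le hgen hnc
  obtain ⟨L, hL, hcL⟩ := hc
  obtain ⟨B, hB⟩ := hlin
  refine .of_natCast_le (E := L) (D := D + Z * (L * B + 1) + 1) (Nat.succ_pos _) fun n hn => ?_
  choose! X hXp hXn using hD n
  have hfibre : ∀ s ∈ box ι n, E.fibreIndex ψ (X s) ≤ L * c s ∧ c s ≤ L * E.fibreIndex ψ (X s) :=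
    fun s hs => by simpa only [hXp s hs] using hcL (X s)
  have hnorm : ∀ s ∈ box ι n, ∀ i < weight n (E.fibreIndex ψ (X s)),
      wordNorm S (X s * E.z ^ (i : ℤ)) ≤ (D + Z * (L * B + 1) + 1) * n := by
    intro s hs i hi
    have hlin : E.fibreIndex ψ (X s) ≤ L * B * n :=
      (hfibre s hs).1.trans ((Nat.mul_le_mul_left L (hB n hn s hs)).trans_eq (mul_assoc _ _ _).symm)
    have hz := hZ ((L * B + 1) * n) (Nat.mul_pos (Nat.succ_pos _) hn) i
      (Nat.lt_succ_iff.1 (hi.trans_le (weight_le_sq_add_one hlin)))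
    linarith [wordNorm_mul_le hgen (X s) (E.z ^ (i : ℤ)), hXn s hs]
  calc weightSum c n ≤ ∑ s ∈ box ι n, L * weight n (E.fibreIndex ψ (X s)) :=
        Finset.sum_le_sum fun s hs =>
          weight_le_mul_weight hL (hfibre s hs).2 (hfibre s hs).1 le_rfl
    _ = L * ∑ s ∈ box ι n, weight n (E.fibreIndex ψ (X s)) := (Finset.mul_sum _ _ _).symm
    _ ≤ L * twistedGrowth ψ S ((D + Z * (L * B + 1) + 1) * n) :=
        Nat.mul_le_mul_left _ (E.sum_weight_fibreIndex_le_twistedGrowth hgen hker hXp hnorm)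

theorem scaleEquiv_twistedGrowth_weightSum [Module.Free ℤ A] [Module.Finite ℤ A]
    (hnc : ∃ x y : G, x * y ≠ y * x)
    (hker : LinearMap.ker p = isolator (E.displacementLattice ψ))
    (hc : Commensurate (E.fibreIndex ψ) fun x => c (p (E.proj x)))
    (hlin : ∃ B, ∀ n, 1 ≤ n → ∀ s ∈ box ι n, c s ≤ B * n) :
    ScaleEquiv (fun n => twistedGrowth ψ S n) (fun n => weightSum c n) :=
  ⟨E.scaleLE_twistedGrowth_weightSum hgen hp hker hc,
    E.scaleLE_weightSum_twistedGrowth hgen hp hnc (hker ▸ le_isolator _) hc hlin⟩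

end Counting

theorem exists_commensurate_fibreIndex [Module.Finite ℤ A]
    (hψ : ψ E.z = E.z ∨ ψ E.z = E.z⁻¹) :
    ∃ (l : ℕ) (τ : Fin l → ℤ) (v : A →ₗ[ℤ] (Fin l → ℤ)),
      E.displacementLattice ψ ≤ LinearMap.ker v ∧
      Commensurate (E.fibreIndex ψ) fun x => vecGcd (τ + v (E.proj x)) := by
  rcases hψ with hψ | hψ
  · obtain ⟨l, τ, v, hv, hindex⟩ := E.exists_fibreIndex_eq_vecGcd hψ
    exact ⟨l, τ, v, hv, 1, le_rfl, fun x => by simp [hindex]⟩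
  · refine ⟨1, 1, 0, by simp, ?_⟩
    have hone : Commensurate (E.fibreIndex ψ) fun _ => 1 :=
      .one_of_dvd two_ne_zero (E.fibreIndex_dvd_two hψ)
    simpa [vecGcd] using hone

theorem exists_growthEquiv_twistedGrowth [Module.Free ℤ A] [Module.Finite ℤ A] {S : Finset G}
    (hgen : Subgroup.closure (S : Set G) = ⊤) (hnc : ∃ x y : G, x * y ≠ y * x)
    (hψ : ψ E.z = E.z ∨ ψ E.z = E.z⁻¹) :
    ∃ d, GrowthEquiv (fun n => twistedGrowth ψ S n) (fun n =>
      (n : ℝ) ^ (Module.finrank ℤ A - Module.finrank ℤ (E.displacementLattice ψ)) *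
        gcdGrowth d n) := by
  obtain ⟨l, τ, v, hv, hindex⟩ := E.exists_commensurate_fibreIndex hψ
  obtain ⟨r, t, p, B, hrank, hp, hker, hB, hpv⟩ := exists_coordinates_mod_isolator hv
  obtain ⟨c, d, hc, ⟨C, hC⟩, hsum⟩ := exists_commensurate_scaleEquiv_weightSum hB τ
  have hfibre : Commensurate (E.fibreIndex ψ) fun x => c (p (E.proj x) ∘ Sum.inl) := by
    simp only [hpv] at hindex
    exact hindex.trans (hc.comp fun x => p (E.proj x) ∘ Sum.inl)
  have hlin : ∃ C, ∀ n, 1 ≤ n → ∀ s ∈ box (Fin r ⊕ Fin t) n, c (s ∘ Sum.inl) ≤ C * n :=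
    ⟨C, fun n hn s hs => hC n hn _ (mem_box.2 fun i => mem_box.1 hs (Sum.inl i))⟩
  refine ⟨d, ScaleEquiv.growthEquiv (Nat.mono_cast.comp (twistedGrowth_mono hgen ψ))
    (pow_mul_gcdGrowth_mono _ d) ?_⟩
  have hprod := hsum.pow_mul t (fun n => Nat.cast_nonneg _)
    fun n => mul_nonneg (by positivity) (gcdGrowth_nonneg d n)
  have := (E.scaleEquiv_twistedGrowth_weightSum hgen hp hnc hker hfibre hlin).trans
    ((scaleEquiv_weightSum_comp_inl c).trans (by simpa only [Fintype.card_fin] using hprod))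
  simpa only [← mul_assoc, ← pow_add, add_comm t r, hrank] using this

end CyclicCentralExtension

/-! ### Generalised Heisenberg groups -/

section FreeAbelianization

variable (G : Type*) [Group G]

/-- The abelianization modulo its torsion subgroup. -/
abbrev FreeAbelianization : Type _ :=
  Additive (Abelianization G) ⧸ Submodule.torsion ℤ (Additive (Abelianization G))

instance [Group.FG G] : Module.Finite ℤ (Additive (Abelianization G)) :=
  have : Group.FG (Abelianization G) := inferInstanceAs (Group.FG (G ⧸ commutator G))
  Module.Finite.iff_addGroup_fg.2 (GroupFG.iff_add_fg.1 this)

instance [Group.FG G] : Module.Free ℤ (FreeAbelianization G) :=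
  Module.free_of_finite_type_torsion_free'

/-- The canonical projection of a group onto its abelianization modulo torsion, whose kernel is
the isolator of the derived subgroup. -/
def freeAbelianProj (g : G) : FreeAbelianization G :=
  Submodule.mkQ _ (Additive.ofMul (Abelianization.of g))

variable {G}

theorem isAdditive_freeAbelianProj : IsAdditive (freeAbelianProj G) := fun g h => by
  simp only [freeAbelianProj, map_mul, ofMul_mul, map_add]

theorem freeAbelianProj_surjective : Function.Surjective (freeAbelianProj G) :=
  (Submodule.mkQ_surjective _).comp
    (Additive.ofMul.surjective.comp (QuotientGroup.mk_surjective (s := commutator G)))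

theorem freeAbelianProj_eq_zero_iff {g : G} :
    freeAbelianProj G g = 0 ↔ ∃ n : ℕ, 0 < n ∧ g ^ n ∈ commutator G := by
  rw [freeAbelianProj, Submodule.mkQ_apply, Submodule.Quotient.mk_eq_zero,
    ← Submodule.mem_toAddSubgroup, Submodule.torsion_int, AddCommGroup.mem_torsion,
    isOfFinAddOrder_iff_nsmul_eq_zero]
  simp only [← ofMul_pow, ← map_pow, ofMul_eq_zero, ← MonoidHom.mem_ker, Abelianization.ker_of]

theorem freeAbelianProj_apply_eq_zero_iff (ψ : G ≃* G) {g : G} :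
    freeAbelianProj G (ψ g) = 0 ↔ freeAbelianProj G g = 0 := by
  have hψ (h : G) : ψ h ∈ commutator G ↔ h ∈ commutator G :=
    SetLike.ext_iff.1 (Subgroup.Characteristic.fixed (H := commutator G) inferInstance ψ) h
  simp only [freeAbelianProj_eq_zero_iff, ← map_pow, hψ]

end FreeAbelianization

section Heisenberg

open scoped commutatorElement

variable {G : Type*} [Group G]

theorem mem_center_of_pow_mem_center (htf : ∀ (g : G) (n : ℕ), 0 < n → g ^ n = 1 → g = 1)
    (h2step : commutator G ≤ Subgroup.center G) {w : G} {n : ℕ} (hn : 0 < n)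
    (hw : w ^ n ∈ Subgroup.center G) : w ∈ Subgroup.center G := by
  refine Subgroup.mem_center_iff.2 fun g => ?_
  have hcomm : Commute w ⁅g, w⁆ := Subgroup.mem_center_iff.1 (h2step
    (Subgroup.commutator_mem_commutator (Subgroup.mem_top g) (Subgroup.mem_top w))) w
  have hconj : (⁅g, w⁆ * w) ^ n = w ^ n := by
    rw [commutatorElement_def, inv_mul_cancel_right, conj_pow, Subgroup.mem_center_iff.1 hw,
      mul_inv_cancel_right]
  rw [hcomm.symm.mul_pow] at hconj
  exact commutatorElement_eq_one_iff_mul_comm.1 (htf _ n hn (mul_eq_right.1 hconj))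

theorem exists_cyclicCentralExtension_freeAbelianProj
    (htf : ∀ (g : G) (n : ℕ), 0 < n → g ^ n = 1 → g = 1)
    (h2step : commutator G ≤ Subgroup.center G) {H : Subgroup G}
    (hH : ∀ g, g ∈ H ↔ ∃ n : ℕ, 0 < n ∧ g ^ n ∈ commutator G) (hcyc : IsCyclic H)
    (hinf : Infinite H) :
    ∃ E : CyclicCentralExtension G (FreeAbelianization G), E.proj = freeAbelianProj G := by
  obtain ⟨z, rfl⟩ := (Subgroup.isCyclic_iff_exists_zpowers_eq_top H).1 hcyc
  obtain ⟨n, hn, hzn⟩ := (hH z).1 (Subgroup.mem_zpowers z)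
  have hcenter : z ∈ Subgroup.center G :=
    mem_center_of_pow_mem_center htf h2step hn (h2step hzn)
  exact ⟨{
    proj := freeAbelianProj G
    z := z
    isAdditive_proj := isAdditive_freeAbelianProj
    proj_surjective := freeAbelianProj_surjective
    proj_eq_zero_iff := fun g => freeAbelianProj_eq_zero_iff.trans (hH g).symm
    commute_z := fun g => Subgroup.mem_center_iff.1 hcenter g
    zpow_injective := injective_zpow_iff_not_isOfFinOrder.2
      (infinite_zpowers.1 (Set.infinite_coe_iff.1 hinf)) },
    rfl⟩

namespace CyclicCentralExtension

theorem map_z_eq_or_eq_inv {A : Type*} [AddCommGroup A] (E : CyclicCentralExtension G A)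
    {ψ : G ≃* G} (hψ : ∀ g, E.proj (ψ g) = 0 ↔ E.proj g = 0) : ψ E.z = E.z ∨ ψ E.z = E.z⁻¹ := by
  have hfixed : Subgroup.zpowers E.z = Subgroup.zpowers (ψ E.z) := by
    refine le_antisymm ?_ (Subgroup.zpowers_le.2 ?_)
    · rw [← ψ.coe_toMonoidHom, ← MonoidHom.map_zpowers, Subgroup.zpowers_le]
      refine ⟨ψ.symm E.z, ?_, ψ.apply_symm_apply _⟩
      rw [SetLike.mem_coe, ← E.proj_eq_zero_iff, ← hψ, ψ.apply_symm_apply, E.proj_eq_zero_iff]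
      exact Subgroup.mem_zpowers E.z
    · rw [← E.proj_eq_zero_iff, hψ, E.proj_eq_zero_iff]
      exact Subgroup.mem_zpowers E.z
  have hz := injective_zpow_iff_not_isOfFinOrder.1 E.zpow_injective
  simpa only [eq_comm] using (Subgroup.zpowers_eq_zpowers_iff hz).1 hfixed

variable {E : CyclicCentralExtension G (FreeAbelianization G)} (hE : E.proj = freeAbelianProj G)
include hE

theorem exists_mul_ne_mul : ∃ x y : G, x * y ≠ y * x := by
  by_contra! hab
  have hbot : commutator G = ⊥ := (commutator_eq_bot_iff G).2 ⟨⟨hab⟩⟩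
  obtain ⟨n, hn, hzn⟩ := freeAbelianProj_eq_zero_iff.1 (hE ▸ (zpow_one E.z ▸ E.proj_zpow 1))
  rw [hbot, Subgroup.mem_bot] at hzn
  exact hn.ne' (by exact_mod_cast E.zpow_injective (a₁ := n) (a₂ := 0) (by simpa using hzn))

theorem finrank_displacementLattice (ψ : G ≃* G) :
    Module.finrank ℤ (E.displacementLattice ψ) = Module.finrank ℤ (Additive
      ↥(MonoidHom.id (Abelianization G) / Abelianization.map ψ.toMonoidHom).range) := by
  set δ := MonoidHom.id (Abelianization G) / Abelianization.map ψ.toMonoidHom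
  let incl : Additive δ.range →ₗ[ℤ] Additive (Abelianization G) :=
    (MonoidHom.toAdditive δ.range.subtype).toIntLinearMap
  let f := (Submodule.torsion ℤ (Additive (Abelianization G))).mkQ ∘ₗ incl
  have hker : LinearMap.ker f ≤ Submodule.torsion ℤ (Additive δ.range) := by
    intro a ha
    obtain ⟨n, hn⟩ := (Submodule.Quotient.mk_eq_zero _).1 ha
    exact ⟨n, Subtype.val_injective hn⟩
  have hf (g : G) : E.displacement ψ g =
      f (Additive.ofMul ⟨δ (Abelianization.of g), _, rfl⟩) := by
    rw [displacement, hE]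
    rfl
  have hrange : E.displacementLattice ψ = LinearMap.range f := by
    refine SetLike.ext fun a => (E.isAdditive_displacement ψ).mem_range.trans ⟨?_, ?_⟩
    · rintro ⟨g, rfl⟩
      exact ⟨_, (hf g).symm⟩
    · rintro ⟨⟨_, y, rfl⟩, rfl⟩
      obtain ⟨g, rfl⟩ := QuotientGroup.mk_surjective (s := commutator G) y
      exact ⟨g, hf g⟩
  rw [hrange, finrank_range_of_ker_le_torsion hker]

end CyclicCentralExtension

end Heisenberg

/-- **Theorem A.** Let `G` be a generalised Heisenberg group (finitely generated, torsion-free,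
2-step nilpotent, with infinite cyclic isolator `G2` of the derived subgroup), `S` a finite
generating set and `ψ` an automorphism of `G`, inducing `ψ̄` on the abelianization.  Then
`gr_{ψ,G}^S(n) ≃ n ^ (rank (G/[G,G]) - rank (id - ψ̄)) * d n` with
`d ∈ {n ↦ n², n ↦ n, n ↦ ln n, n ↦ 1}`. -/
theorem twisted_growth_heisenberg
    (G : Type*) [Group G] (S : Finset G)
    (hgen : Subgroup.closure (S : Set G) = ⊤)
    (htf : ∀ (g : G) (n : ℕ), 0 < n → g ^ n = 1 → g = 1)
    (h2step : commutator G ≤ Subgroup.center G)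
    (G2 : Subgroup G) [G2.Normal]
    (hG2 : ∀ g : G, g ∈ G2 ↔ ∃ n : ℕ, 0 < n ∧ g ^ n ∈ commutator G)
    (hcyc : IsCyclic G2) (hinf : Infinite G2)
    (ψ : G ≃* G) :
    ∃ d : ℕ → ℝ,
      (d = (fun n : ℕ => (n : ℝ) ^ 2) ∨ d = (fun n : ℕ => (n : ℝ)) ∨
        d = (fun n : ℕ => Real.log n) ∨ d = (fun _ : ℕ => (1 : ℝ))) ∧
      GrowthEquiv (fun n => (twistedGrowth ψ S n : ℝ))
        (fun n =>
          (n : ℝ) ^ (Module.finrank ℤ (Additive (Abelianization G)) -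
            Module.finrank ℤ
              (Additive
                ↥(MonoidHom.id (Abelianization G) / Abelianization.map ψ.toMonoidHom).range)) *
          d n) := by
  have : Group.FG G := ⟨⟨S, hgen⟩⟩
  obtain ⟨E, hE⟩ := exists_cyclicCentralExtension_freeAbelianProj htf h2step hG2 hcyc hinf
  have hz : ψ E.z = E.z ∨ ψ E.z = E.z⁻¹ :=
    E.map_z_eq_or_eq_inv fun g => hE ▸ freeAbelianProj_apply_eq_zero_iff ψ
  obtain ⟨d, hd⟩ := E.exists_growthEquiv_twistedGrowth hgen
    (CyclicCentralExtension.exists_mul_ne_mul hE) hz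
  rw [finrank_quotient_of_le_torsion le_rfl,
    CyclicCentralExtension.finrank_displacementLattice hE] at hd
  exact ⟨gcdGrowth d, gcdGrowth_eq_sq_or_id_or_log_or_one d, hd⟩
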